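/- arXiv:1509.04689 — 7 statements merged into one kernel-verified Lean document; each statement's English description precedes it below -/
import Mathlib

section
/- Let 1 ≤ d ≤ s be integers. Let x be a random vector distributed according to the uniform (unitarily invariant) probability measure on the unit sphere of ℂ^d ⊗ ℂ^s ≅ ℂ^{ds} (coordinates indexed by pairs (i,a) ∈ {1,…,d}×{1,…,s}), and let ρ ∈ M_d(ℂ) be the partial trace over ℂ^s of the rank-one projection xx*, i.e. ρ_{ij} = Σ_{a=1}^{s} x_{(i,a)} · conj(x_{(j,a)}). Then the expected von Neumann entropy of ρ is E[H(ρ)] = Σ_{i=s+1}^{ds} 1/i − (d−1)/(2s), where H(ρ) = −Σ_{i=1}^{d} λ_i log λ_i with λ₁,…,λ_d the eigenvalues of ρ (and the convention 0·log 0 = 0). -/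
open MeasureTheory

noncomputable instance euclideanComplexMeasurableSpace {ι : Type*} :
    MeasurableSpace (EuclideanSpace ℂ ι) := borel _

instance euclideanComplexBorelSpace {ι : Type*} : BorelSpace (EuclideanSpace ℂ ι) := ⟨rfl⟩

namespace Page

open Finset

theorem sum_finsuppAntidiag {ι R : Type*} [Fintype ι] [DecidableEq ι] [AddCommMonoid R]
    (F : (ι → ℕ) → R) (k : ℕ) :
    ∑ f ∈ finsuppAntidiag (univ : Finset ι) k, F f = ∑ f ∈ piAntidiag univ k, F f := by
  refine Finset.sum_bij' (fun f _ => (f : ι → ℕ)) (fun f _ => Finsupp.equivFunOnFinite.symm f) ?_ ?_ ?_ ?_ ?_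
  · intro a ha; simpa using ha
  · intro a ha; simpa using ha
  · intro a ha; simp
  · intro a ha; simp
  · intro a ha; simp

theorem card_piAnti {ι : Type*} [Fintype ι] [DecidableEq ι] (k : ℕ) :
    #(piAntidiag (univ : Finset ι) k) = (Fintype.card ι + k - 1).choose k := by
  rw [card_eq_sum_ones, ← sum_finsuppAntidiag (fun _ => 1), ← card_eq_sum_ones,
    card_finsuppAntidiag_nat_eq_choose, card_univ]

/-- complete homogeneous symmetric function -/
noncomputable def hh {ι R : Type*} [Fintype ι] [DecidableEq ι] [CommRing R] (l : ι → R) (k : ℕ) : R :=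
  ∑ a ∈ piAntidiag (univ : Finset ι) k, ∏ i, l i ^ a i

/-- elementary symmetric function -/
noncomputable def ee {ι R : Type*} [Fintype ι] [CommRing R] (l : ι → R) (j : ℕ) : R :=
  ∑ S ∈ powersetCard j (univ : Finset ι), ∏ i ∈ S, l i

open PowerSeries in
theorem newton {ι R : Type*} [Fintype ι] [DecidableEq ι] [CommRing R] (l : ι → R) (n : ℕ) (hn : 1 ≤ n) :
    ∑ i, l i ^ n = ∑ p ∈ antidiagonal n, (-1) ^ (p.1 + 1) * p.1 * ee l p.1 * hh l p.2 := by
  have hg : ∀ r : R, (PowerSeries.mk fun n => r ^ n) * (1 - C r * X) = 1 := by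
    intro r
    ext m
    rw [mul_sub, mul_one, mul_left_comm, map_sub, PowerSeries.coeff_C_mul]
    cases m with
    | zero => simp
    | succ m => simp [PowerSeries.coeff_succ_mul_X, PowerSeries.coeff_one, pow_succ']
  have hH : ∀ k, coeff k (∏ i, PowerSeries.mk fun n => l i ^ n) = hh l k := by
    intro k
    rw [PowerSeries.coeff_prod, hh]
    simp only [coeff_mk]
    rw [sum_finsuppAntidiag (fun a : ι → ℕ => ∏ i, l i ^ a i)]
  set E : PowerSeries R := ∏ i, (1 - C (l i) * X) with hE
  have hEc : ∀ j, coeff j E = (-1) ^ j * ee l j := by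
    intro j
    have : E = ∑ S ∈ (univ : Finset ι).powerset, C ((-1) ^ #S * ∏ i ∈ S, l i) * X ^ #S := by
      rw [hE]
      simp only [sub_eq_add_neg]
      rw [Finset.prod_one_add]
      refine sum_congr rfl fun S _ => ?_
      rw [Finset.prod_neg, Finset.prod_mul_distrib, prod_const, map_mul, map_prod]
      simp [mul_assoc]
    rw [this, map_sum, ee, powersetCard_eq_filter, sum_filter, mul_sum]
    refine sum_congr rfl fun S _ => ?_
    rw [PowerSeries.coeff_C_mul, coeff_X_pow]
    by_cases h : j = #S
    · subst h; simp
    · rw [if_neg h, if_neg (fun h' => h h'.symm)]; simp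
  have key' : ∀ T : Finset ι, - (X * derivative R (∏ i ∈ T, (1 - C (l i) * X))) *
      (∏ i ∈ T, PowerSeries.mk fun n => l i ^ n)
      = ∑ i ∈ T, C (l i) * X * PowerSeries.mk fun n => l i ^ n := by
    intro T
    induction T using Finset.induction_on with
    | empty => simp
    | insert i T hi ih =>
      rw [prod_insert hi, prod_insert hi, sum_insert hi, Derivation.leibniz, ← ih]
      have h1 : derivative R (1 - C (l i) * X : PowerSeries R) = - C (l i) := by
        rw [map_sub, Derivation.leibniz]
        simp
      have h2 : (∏ k ∈ T, (1 - C (l k) * X)) * ∏ k ∈ T, (PowerSeries.mk fun n => l k ^ n)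
          = (1 : PowerSeries R) := by
        rw [← prod_mul_distrib]
        exact prod_eq_one fun i _ => by rw [mul_comm, hg]
      rw [h1, smul_eq_mul, smul_eq_mul]
      linear_combination (C (l i) * X * PowerSeries.mk fun n => l i ^ n) * h2 +
        (- (X * derivative R (∏ i ∈ T, (1 - C (l i) * X))) *
      (∏ i ∈ T, PowerSeries.mk fun n => l i ^ n)) * hg (l i)
  have key := key' univ
  rw [← hE] at key
  have := congrArg (coeff n) key
  rw [PowerSeries.coeff_mul, map_sum] at this
  obtain ⟨m, rfl⟩ : ∃ m, n = m + 1 := ⟨n - 1, by omega⟩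
  calc _ = ∑ i, coeff (m+1) (C (l i) * X * PowerSeries.mk fun n => l i ^ n) := by
        refine sum_congr rfl fun i _ => ?_
        rw [mul_assoc, PowerSeries.coeff_C_mul, coeff_succ_X_mul, coeff_mk, pow_succ']
    _ = _ := this.symm
    _ = _ := by
        refine sum_congr rfl fun p _ => ?_
        rw [hH]
        congr 1
        rcases p with ⟨j, k⟩
        cases j with
        | zero => simp
        | succ j =>
          simp only [map_neg, coeff_succ_X_mul, coeff_derivative, hEc]
          push_cast
          ring

end Page

open MeasureTheory
namespace Page
open Finset

/-- uniform measure on the sphere -/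
structure IsUnif {ι : Type*} [Fintype ι] (μ : Measure (EuclideanSpace ℂ ι)) : Prop where
  prob : IsProbabilityMeasure μ
  sph : μ (Metric.sphere 0 1) = 1
  inv : ∀ U : EuclideanSpace ℂ ι ≃ₗᵢ[ℂ] EuclideanSpace ℂ ι, Measure.map (fun x => U x) μ = μ

/-- isometry of a unitary matrix -/
noncomputable def uni {ι : Type*} [Fintype ι] [DecidableEq ι] (A : Matrix ι ι ℂ)
    (hA : A ∈ unitary (Matrix ι ι ℂ)) : EuclideanSpace ℂ ι ≃ₗᵢ[ℂ] EuclideanSpace ℂ ι :=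
  Unitary.linearIsometryEquiv ⟨Matrix.toEuclideanCLM (n := ι) (𝕜 := ℂ) A, Unitary.map_mem _ hA⟩

theorem uni_apply {ι : Type*} [Fintype ι] [DecidableEq ι] (A : Matrix ι ι ℂ)
    (hA : A ∈ unitary (Matrix ι ι ℂ)) (x : EuclideanSpace ℂ ι) (i : ι) :
    uni A hA x i = ∑ k, A i k * x k := by
  rfl

theorem IsUnif.ae_sph {ι : Type*} [Fintype ι] {μ : Measure (EuclideanSpace ℂ ι)} (h : IsUnif μ) :
    ∀ᵐ x ∂μ, x ∈ Metric.sphere (0 : EuclideanSpace ℂ ι) 1 := by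
  have := h.prob
  exact (mem_ae_iff_prob_eq_one Metric.isClosed_sphere.measurableSet).2 h.sph

theorem IsUnif.integrable {ι : Type*} [Fintype ι] {μ : Measure (EuclideanSpace ℂ ι)} (h : IsUnif μ)
    {F : Type*} [NormedAddCommGroup F] [SecondCountableTopology F]
    {f : EuclideanSpace ℂ ι → F} (hf : Continuous f) : Integrable f μ := by
  have := h.prob
  obtain ⟨C, hC⟩ := (isCompact_sphere (0 : EuclideanSpace ℂ ι) 1).exists_bound_of_continuousOn hf.continuousOn
  exact Integrable.of_bound hf.aestronglyMeasurable C (h.ae_sph.mono hC)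

theorem IsUnif.int_inv {ι : Type*} [Fintype ι] {μ : Measure (EuclideanSpace ℂ ι)} (h : IsUnif μ)
    (U : EuclideanSpace ℂ ι ≃ₗᵢ[ℂ] EuclideanSpace ℂ ι) (f : EuclideanSpace ℂ ι → ℂ) :
    ∫ x, f (U x) ∂μ = ∫ x, f x ∂μ := by
  conv_rhs => rw [← h.inv U]
  exact (U.toHomeomorph.measurableEmbedding.integral_map f).symm

theorem IsUnif.int_zero {ι : Type*} [Fintype ι] {μ : Measure (EuclideanSpace ℂ ι)} (h : IsUnif μ)
    (U : EuclideanSpace ℂ ι ≃ₗᵢ[ℂ] EuclideanSpace ℂ ι) (f : EuclideanSpace ℂ ι → ℂ) (c : ℂ) (hc : c ≠ 1)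
    (hf : ∀ x, f (U x) = c * f x) : ∫ x, f x ∂μ = 0 := by
  have := h.int_inv U f
  simp only [hf, integral_const_mul] at this
  have h2 : (c - 1) * ∫ x, f x ∂μ = 0 := by rw [sub_mul, this]; ring
  rcases mul_eq_zero.1 h2 with h3 | h3
  · exact absurd (sub_eq_zero.1 h3) hc
  · exact h3

/-- phase at a coordinate -/
theorem exists_phase {ι : Type*} [Fintype ι] [DecidableEq ι] (e : ι) (θ : ℂ) (hθ : ‖θ‖ = 1) :
    ∃ U : EuclideanSpace ℂ ι ≃ₗᵢ[ℂ] EuclideanSpace ℂ ι, ∀ x i, U x i = (if i = e then θ else 1) * x i := by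
  refine ⟨uni (Matrix.diagonal fun i => if i = e then θ else 1) ?_, ?_⟩
  · have h1 : θ * star θ = 1 := by
      rw [Complex.star_def, Complex.mul_conj, Complex.normSq_eq_norm_sq, hθ]; simp
    have h2 : star θ * θ = 1 := by rw [mul_comm, h1]
    rw [Unitary.mem_iff, Matrix.star_eq_conjTranspose, Matrix.diagonal_conjTranspose,
      Matrix.diagonal_mul_diagonal, Matrix.diagonal_mul_diagonal]
    constructor
    all_goals
      rw [← Matrix.diagonal_one]
      congr 1; funext i
      simp only [Pi.star_apply]
      split_ifs <;> simp [h1, h2]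
      try simpa using h1
      try simpa using h2
  · intro x i
    rw [uni_apply]
    simp [Matrix.diagonal_apply]

theorem exists_rot {ι : Type*} [Fintype ι] [DecidableEq ι] (i0 : ι) (y : EuclideanSpace ℂ ι) :
    ∃ U : EuclideanSpace ℂ ι ≃ₗᵢ[ℂ] EuclideanSpace ℂ ι, U y = (‖y‖ : ℂ) • EuclideanSpace.single i0 (1 : ℂ) := by
  by_cases hy : y = 0
  · exact ⟨LinearIsometryEquiv.refl ℂ _, by simp [hy]⟩
  have hn : ‖y‖ ≠ 0 := by simpa using hy
  obtain ⟨b, hb⟩ := Orthonormal.exists_orthonormalBasis_extension_of_card_eq (𝕜 := ℂ)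
    (E := EuclideanSpace ℂ ι) (ι := ι) (by simp) (v := fun _ => ((‖y‖ : ℂ)⁻¹) • y) (s := {i0}) (by
      rw [orthonormal_iff_ite]
      rintro ⟨i, rfl⟩ ⟨j, rfl⟩
      have h1 : ‖((‖y‖ : ℂ)⁻¹) • y‖ = 1 := by rw [norm_smul]; simp [hn]
      simp [h1])
  refine ⟨b.repr, ?_⟩
  have h1 : y = (‖y‖ : ℂ) • b i0 := by
    rw [hb i0 rfl, smul_smul, mul_inv_cancel₀ (by exact_mod_cast hn), one_smul]
  conv_lhs => rw [h1]
  rw [map_smul, b.repr_self]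

end Page

open MeasureTheory
namespace Page
open Finset ComplexConjugate

theorem IsUnif.mixed_zero {ι : Type*} [Fintype ι] [DecidableEq ι] {μ : Measure (EuclideanSpace ℂ ι)}
    (h : IsUnif μ) (a b : ι → ℕ) (hab : a ≠ b) :
    ∫ x, (∏ i, x i ^ a i) * (∏ i, conj (x i) ^ b i) ∂μ = 0 := by
  obtain ⟨e, he⟩ := Function.ne_iff.1 hab
  obtain ⟨U, hU⟩ := exists_phase e (Complex.exp Complex.I) (by
    simpa using Complex.norm_exp_ofReal_mul_I 1)
  refine h.int_zero U _ (Complex.exp (((a e : ℤ) - (b e : ℤ) : ℤ) * Complex.I)) ?_ ?_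
  · intro hc
    obtain ⟨n, hn⟩ := Complex.exp_eq_one_iff.1 hc
    have h2 : (((a e : ℤ) - (b e : ℤ) : ℤ) : ℂ) = n * (2 * Real.pi) := by
      have := Complex.I_ne_zero
      apply mul_right_cancel₀ this
      rw [hn]; ring
    have h3 : (((a e : ℤ) - (b e : ℤ) : ℤ) : ℝ) = n * (2 * Real.pi) := by exact_mod_cast h2
    have hn0 : n ≠ 0 := by
      rintro rfl
      simp only [Int.cast_zero, zero_mul, Int.cast_eq_zero] at h3
      omega
    refine irrational_pi.ne_rational ((a e : ℤ) - (b e : ℤ)) (n * 2) ?_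
    have : (n : ℝ) ≠ 0 := by exact_mod_cast hn0
    push_cast at h3 ⊢
    field_simp
    linarith
  · intro x
    simp only [hU, mul_pow, map_mul, prod_mul_distrib]
    have h1 : ∏ i, (if i = e then Complex.exp Complex.I else 1) ^ a i = Complex.exp Complex.I ^ a e := by
      rw [Finset.prod_eq_single e]
      · simp
      · intro i _ hi; simp [hi]
      · simp
    have h2 : ∏ i, (conj (if i = e then Complex.exp Complex.I else 1)) ^ b i
        = conj (Complex.exp Complex.I) ^ b e := by
      rw [Finset.prod_eq_single e]
      · simp
      · intro i _ hi; simp [hi]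
      · simp
    rw [h1, h2]
    have h3 : Complex.exp (((a e : ℤ) - (b e : ℤ) : ℤ) * Complex.I) =
        Complex.exp Complex.I ^ a e * conj (Complex.exp Complex.I) ^ b e := by
      rw [← Complex.exp_conj, Complex.conj_I, ← Complex.exp_nat_mul, ← Complex.exp_nat_mul, ← Complex.exp_add]
      congr 1; push_cast; ring
    rw [h3]; ring

theorem IsUnif.moment {ι : Type*} [Fintype ι] [DecidableEq ι] {μ : Measure (EuclideanSpace ℂ ι)}
    (h : IsUnif μ) (i0 : ι) (m : ι → ℕ) (n : ℕ) (hn : ∑ i, m i = n) :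
    ∫ x, ∏ i, (x i * conj (x i)) ^ m i ∂μ
      = (∏ i, ((m i).factorial : ℂ)) / ((Fintype.card ι).ascFactorial n : ℂ) := by
  have := h.prob
  set M : (ι → ℕ) → ℂ := fun a => ∫ x, ∏ i, (x i * conj (x i)) ^ a i ∂μ with hM
  set c : ℂ := ∫ x, (x i0 * conj (x i0)) ^ n ∂μ with hc
  set A := piAntidiag (univ : Finset ι) n with hA
  -- main identity
  have h1 : ∀ r : ι → ℝ, ∑ a ∈ A, (Nat.multinomial univ a : ℂ) ^ 2 * M a * ∏ i, (r i : ℂ) ^ (2 * a i)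
      = ∑ a ∈ A, c * Nat.multinomial univ a * ∏ i, (r i : ℂ) ^ (2 * a i) := by
    intro r
    have e1 : ∫ x : EuclideanSpace ℂ ι, (∑ i, r i * x i) ^ n * (∑ i, r i * conj (x i)) ^ n ∂μ
        = ∑ a ∈ A, (Nat.multinomial univ a : ℂ) ^ 2 * M a * ∏ i, (r i : ℂ) ^ (2 * a i) := by
      have : ∀ x : EuclideanSpace ℂ ι, (∑ i, r i * x i) ^ n * (∑ i, r i * conj (x i)) ^ n
          = ∑ a ∈ A, ∑ b ∈ A, (Nat.multinomial univ a * Nat.multinomial univ b *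
            (∏ i, (r i : ℂ) ^ a i) * (∏ i, (r i : ℂ) ^ b i)) *
             ((∏ i, x i ^ a i) * (∏ i, conj (x i) ^ b i)) := by
        intro x
        rw [sum_pow_eq_sum_piAntidiag, sum_pow_eq_sum_piAntidiag, sum_mul_sum]
        refine sum_congr rfl fun a _ => sum_congr rfl fun b _ => ?_
        simp only [mul_pow, prod_mul_distrib]; ring
      simp only [this]
      rw [integral_finsetSum _ fun a _ => h.integrable (by fun_prop)]
      refine sum_congr rfl fun a ha => ?_
      rw [integral_finsetSum _ fun a _ => h.integrable (by fun_prop)]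
      rw [Finset.sum_eq_single a]
      · rw [integral_const_mul, hM]
        simp only [mul_pow, prod_mul_distrib, pow_mul, two_mul, pow_add]
        ring
      · intro b _ hb
        rw [integral_const_mul, h.mixed_zero a b hb.symm, mul_zero]
      · exact fun h => absurd ha h
    have e2 : ∫ x : EuclideanSpace ℂ ι, (∑ i, r i * x i) ^ n * (∑ i, r i * conj (x i)) ^ n ∂μ
        = (∑ i, (r i : ℂ) ^ 2) ^ n * c := by
      set y : EuclideanSpace ℂ ι := WithLp.toLp 2 fun i => (r i : ℂ) with hy
      obtain ⟨U, hU⟩ := exists_rot i0 y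
      have e3 : ∀ x : EuclideanSpace ℂ ι, ∑ i, r i * x i = (‖y‖ : ℂ) * U x i0 := by
        intro x
        have : inner ℂ y x = ∑ i, r i * x i := by
          simp [PiLp.inner_apply, hy, mul_comm]
        rw [← this, ← U.inner_map_map, hU, inner_smul_left, EuclideanSpace.inner_single_left]
        simp
      have e4 : ∀ x : EuclideanSpace ℂ ι, ∑ i, r i * conj (x i) = (‖y‖ : ℂ) * conj (U x i0) := by
        intro x
        have := congrArg conj (e3 x)
        simpa using this
      have e5 : (∑ i, (r i : ℂ) ^ 2) = (‖y‖ : ℂ) ^ 2 := by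
        rw [← Complex.ofReal_pow, EuclideanSpace.norm_sq_eq]
        simp [hy]
      rw [e5, hc, ← h.int_inv U (fun x => (x i0 * conj (x i0)) ^ n), ← integral_const_mul]
      congr 1; funext x
      rw [e3, e4]; ring
    rw [← e1, e2, sum_pow_eq_sum_piAntidiag, sum_mul]
    refine sum_congr rfl fun a _ => ?_
    simp only [pow_mul]; ring
  -- compare coefficients
  have h2 : ∀ a ∈ A, (Nat.multinomial univ a : ℂ) ^ 2 * M a = c * Nat.multinomial univ a := by
    have hp : (∑ a ∈ A, MvPolynomial.monomial (Finsupp.equivFunOnFinite.symm fun i => 2 * a i)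
        ((Nat.multinomial univ a : ℂ) ^ 2 * M a)) =
        ∑ a ∈ A, MvPolynomial.monomial (Finsupp.equivFunOnFinite.symm fun i => 2 * a i)
        (c * Nat.multinomial univ a) := by
      apply MvPolynomial.funext_set (fun _ => Set.range ((↑) : ℝ → ℂ))
        (fun _ => Set.infinite_range_of_injective Complex.ofReal_injective)
      intro x hx
      choose r hr using fun i => hx i (Set.mem_univ i)
      have hr' : x = fun i => (r i : ℂ) := funext fun i => (hr i).symm
      subst hr'
      simp only [map_sum, MvPolynomial.eval_monomial, Finsupp.prod_fintype, pow_zero, implies_true]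
      simpa using h1 r
    intro a ha
    have := congrArg (MvPolynomial.coeff (Finsupp.equivFunOnFinite.symm fun i => 2 * a i)) hp
    simp only [MvPolynomial.coeff_sum, MvPolynomial.coeff_monomial] at this
    have hinj : ∀ b : ι → ℕ, (Finsupp.equivFunOnFinite.symm fun i => 2 * b i) =
        (Finsupp.equivFunOnFinite.symm fun i => 2 * a i) ↔ b = a := by
      intro b
      rw [Equiv.apply_eq_iff_eq]
      constructor
      · intro hh; funext i; have := congrFun hh i; omega
      · rintro rfl; rfl
    simpa [hinj, ha] using this
  have h3 : ∀ a ∈ A, (Nat.multinomial univ a : ℂ) * M a = c := by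
    intro a ha
    have h0 : (Nat.multinomial univ a : ℂ) ≠ 0 := by
      exact_mod_cast (Nat.multinomial_pos _ _).ne'
    apply mul_left_cancel₀ h0
    linear_combination h2 a ha
  have h4 : (1 : ℂ) = c * ((Fintype.card ι + n - 1).choose n : ℕ) := by
    have e1 : ∫ x : EuclideanSpace ℂ ι, (∑ i, x i * conj (x i)) ^ n ∂μ = 1 := by
      have : ∀ᵐ x ∂μ, (∑ i, x i * conj (x i)) ^ n = 1 := by
        filter_upwards [h.ae_sph] with x hx
        have hx' : ‖x‖ ^ 2 = 1 := by rw [mem_sphere_zero_iff_norm.1 hx]; simp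
        rw [EuclideanSpace.norm_sq_eq] at hx'
        have : ∑ i, x i * conj (x i) = ((∑ i, ‖x i‖ ^ 2 : ℝ) : ℂ) := by
          push_cast
          exact sum_congr rfl fun i _ => by rw [Complex.mul_conj, Complex.normSq_eq_norm_sq]; simp
        rw [this, hx']; simp
      rw [integral_congr_ae this]; simp
    rw [← e1, ← card_piAnti]
    simp only [sum_pow_eq_sum_piAntidiag]
    rw [integral_finsetSum _ fun a _ => h.integrable (by fun_prop)]
    simp only [integral_const_mul]
    rw [sum_congr rfl h3]
    simp [hA, mul_comm]
  have hm : m ∈ A := by simp [hA, hn]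
  have h5 := h3 m hm
  have h6 : (∏ i, ((m i).factorial : ℂ)) * Nat.multinomial univ m = n.factorial := by
    have := Nat.multinomial_spec univ m
    rw [hn] at this
    exact_mod_cast this
  have hK : ((Fintype.card ι).ascFactorial n : ℂ) = n.factorial * ((Fintype.card ι + n - 1).choose n : ℕ) := by
    rw [Nat.ascFactorial_eq_factorial_mul_choose']
    push_cast; rfl
  have hne : ((Fintype.card ι + n - 1).choose n : ℂ) ≠ 0 := by
    intro h0; rw [h0] at h4; simp at h4
  have hne2 : (n.factorial : ℂ) ≠ 0 := by exact_mod_cast n.factorial_ne_zero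
  rw [eq_div_iff (by rw [hK]; exact mul_ne_zero hne2 hne), hK]
  have hmul : (Nat.multinomial univ m : ℂ) ≠ 0 := by
      exact_mod_cast (Nat.multinomial_pos _ _).ne'
  apply mul_left_cancel₀ hmul
  change (Nat.multinomial univ m : ℂ) * (M m * _) = _
  rw [← mul_assoc, h5, mul_left_comm, ← h4, mul_one, ← h6]; ring

end Page

open MeasureTheory
namespace Page
open Finset ComplexConjugate

/-- reduced matrix -/
noncomputable def rho {d s : ℕ} (x : EuclideanSpace ℂ (Fin d × Fin s)) : Matrix (Fin d) (Fin d) ℂ :=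
  (Matrix.of fun (i : Fin d) (a : Fin s) => x (i, a)) * (Matrix.of fun (i : Fin d) (a : Fin s) => x (i, a)).conjTranspose

theorem rho_apply {d s : ℕ} (x : EuclideanSpace ℂ (Fin d × Fin s)) (i k : Fin d) :
    rho x i k = ∑ a, x (i, a) * conj (x (k, a)) := by
  simp [rho, Matrix.mul_apply]

/-- sum of principal minors -/
noncomputable def em {d : ℕ} (M : Matrix (Fin d) (Fin d) ℂ) (j : ℕ) : ℂ :=
  ∑ S ∈ (univ : Finset (Fin d)).powersetCard j,
      (M.submatrix (Subtype.val : S → Fin d) (Subtype.val : S → Fin d)).det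

theorem continuous_rho {d s : ℕ} (i k : Fin d) :
    Continuous fun x : EuclideanSpace ℂ (Fin d × Fin s) => rho x i k := by
  simp only [rho_apply]
  fun_prop

theorem sum_sign {S J : Type*} [Fintype S] [DecidableEq S] [DecidableEq J] (b : S → J) [Decidable (Function.Injective b)] :
    ∑ π : Equiv.Perm S, ((Equiv.Perm.sign π : ℤ) : ℂ) * (if (∀ i, b (π i) = b i) then 1 else 0)
      = if Function.Injective b then 1 else 0 := by
  have h1 : ∑ π : Equiv.Perm S, ((Equiv.Perm.sign π : ℤ) : ℂ) * (if (∀ i, b (π i) = b i) then 1 else 0)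
      = (Matrix.of fun i k : S => if b i = b k then (1 : ℂ) else 0).det := by
    rw [Matrix.det_apply']
    refine sum_congr rfl fun π _ => ?_
    congr 1
    simp only [Matrix.of_apply]
    rw [Finset.prod_ite_zero]
    simp
  rw [h1]
  split_ifs with hb
  · have : (Matrix.of fun i k : S => if b i = b k then (1 : ℂ) else 0) = 1 := by
      ext i k
      simp [Matrix.one_apply, hb.eq_iff]
    rw [this, Matrix.det_one]
  · rw [Function.Injective] at hb
    push Not at hb
    obtain ⟨i, k, h, hik⟩ := hb
    exact Matrix.det_zero_of_row_eq hik (by ext l; simp [h])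

open Classical in
theorem IsUnif.minor {d s : ℕ} {μ : Measure (EuclideanSpace ℂ (Fin d × Fin s))} (h : IsUnif μ)
    (S : Finset (Fin d)) (i0 : Fin d) (k : ℕ) :
    ∫ x, ((rho x).submatrix (Subtype.val : S → Fin d) (Subtype.val : S → Fin d)).det * rho x i0 i0 ^ k ∂μ
    = ∑ b : S → Fin s, (if Function.Injective b then 1 else 0) *
       ∫ x, (∏ i : S, x (i.1, b i) * conj (x (i.1, b i))) * rho x i0 i0 ^ k ∂μ := by
  have hr := continuous_rho (d := d) (s := s) i0 i0
  have h1 : ∀ x : EuclideanSpace ℂ (Fin d × Fin s),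
      ((rho x).submatrix (Subtype.val : S → Fin d) (Subtype.val : S → Fin d)).det * rho x i0 i0 ^ k
      = ∑ π : Equiv.Perm S, ∑ b : S → Fin s, ((Equiv.Perm.sign π : ℤ) : ℂ) *
        ((∏ i : S, x ((π i).1, b i) * conj (x (i.1, b i))) * rho x i0 i0 ^ k) := by
    intro x
    rw [Matrix.det_apply', sum_mul]
    refine sum_congr rfl fun π _ => ?_
    simp only [Matrix.submatrix_apply, rho_apply _ (Subtype.val _) _]
    rw [Finset.prod_univ_sum, Fintype.piFinset_univ, mul_assoc, sum_mul, mul_sum]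
  have h2 : ∀ (π : Equiv.Perm S) (b : S → Fin s),
      ∫ x, (∏ i : S, x ((π i).1, b i) * conj (x (i.1, b i))) * rho x i0 i0 ^ k ∂μ
      = (if (∀ i, b (π i) = b i) then 1 else 0) *
        ∫ x, (∏ i : S, x (i.1, b i) * conj (x (i.1, b i))) * rho x i0 i0 ^ k ∂μ := by
    intro π b
    split_ifs with hb
    · rw [one_mul]
      congr 1; funext x
      congr 1
      rw [prod_mul_distrib, prod_mul_distrib]
      congr 1
      rw [← Equiv.prod_comp π (fun i : S => x (i.1, b i))]
      simp only [hb]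
    · rw [zero_mul]
      push Not at hb
      obtain ⟨i1, hi1⟩ := hb
      obtain ⟨U, hU⟩ := exists_phase (((π i1).1, b i1) : Fin d × Fin s) (-1) (by simp)
      refine h.int_zero U _ (-1) (by norm_num) ?_
      intro x
      have e1 : rho (U x) i0 i0 = rho x i0 i0 := by
        simp only [rho_apply, hU]
        refine sum_congr rfl fun a _ => ?_
        split_ifs <;> simp
      rw [e1, ← mul_assoc]
      congr 1
      simp only [hU, map_mul, prod_mul_distrib]
      have e2 : ∏ i : S, (if (((π i).1, b i) : Fin d × Fin s) = ((π i1).1, b i1) then (-1 : ℂ) else 1) = -1 := by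
        rw [Finset.prod_eq_single i1]
        · simp
        · intro i _ hi
          rw [if_neg]
          intro hc
          apply hi
          exact π.injective (Subtype.ext (Prod.ext_iff.1 hc).1)
        · simp
      have e3 : ∏ i : S, conj (if ((i.1, b i) : Fin d × Fin s) = ((π i1).1, b i1) then (-1 : ℂ) else 1) = 1 := by
        refine prod_eq_one fun i _ => ?_
        rw [if_neg]
        · simp
        · intro hc
          have h1 := (Prod.ext_iff.1 hc).1
          have h2 := (Prod.ext_iff.1 hc).2
          have h3 : i = π i1 := Subtype.ext h1
          subst h3
          exact hi1 h2
      rw [e2, e3]; ring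
  simp only [h1]
  rw [integral_finsetSum _ fun a _ => h.integrable (by fun_prop)]
  have h3 : ∀ π : Equiv.Perm S, ∫ x, ∑ b : S → Fin s, ((Equiv.Perm.sign π : ℤ) : ℂ) *
        ((∏ i : S, x ((π i).1, b i) * conj (x (i.1, b i))) * rho x i0 i0 ^ k) ∂μ
      = ∑ b : S → Fin s, (((Equiv.Perm.sign π : ℤ) : ℂ) * (if (∀ i, b (π i) = b i) then 1 else 0)) *
        ∫ x, (∏ i : S, x (i.1, b i) * conj (x (i.1, b i))) * rho x i0 i0 ^ k ∂μ := by
    intro π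
    rw [integral_finsetSum _ fun a _ => h.integrable (by fun_prop)]
    refine sum_congr rfl fun b _ => ?_
    rw [integral_const_mul, h2, mul_assoc]
  simp only [h3]
  rw [sum_comm]
  refine sum_congr rfl fun b _ => ?_
  rw [← sum_mul]
  congr 1
  convert sum_sign b

theorem IsUnif.diagTerm {d s : ℕ} {μ : Measure (EuclideanSpace ℂ (Fin d × Fin s))} (h : IsUnif μ)
    (S : Finset (Fin d)) (B : Fin d → Fin s) (i0 : Fin d) (k : ℕ) :
    ∫ x, (∏ i ∈ S, x (i, B i) * conj (x (i, B i))) * rho x i0 i0 ^ k ∂μ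
    = k.factorial / ((d * s).ascFactorial (#S + k) : ℕ) *
      ∑ m ∈ piAntidiag (univ : Finset (Fin s)) k, (if i0 ∈ S then (m (B i0) : ℂ) + 1 else 1) := by
  have hs0 : Fin d × Fin s := (i0, B i0)
  set Mx : (Fin s → ℕ) → Fin d × Fin s → ℕ := fun m p =>
    (if p.1 ∈ S ∧ B p.1 = p.2 then 1 else 0) + (if p.1 = i0 then m p.2 else 0) with hMx
  have h1 : ∀ x : EuclideanSpace ℂ (Fin d × Fin s),
      (∏ i ∈ S, x (i, B i) * conj (x (i, B i))) * rho x i0 i0 ^ k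
      = ∑ m ∈ piAntidiag (univ : Finset (Fin s)) k, (Nat.multinomial univ m : ℂ) *
        ∏ p, (x p * conj (x p)) ^ Mx m p := by
    intro x
    rw [rho_apply, sum_pow_eq_sum_piAntidiag, mul_sum]
    refine sum_congr rfl fun m _ => ?_
    rw [mul_left_comm]
    congr 1
    simp only [hMx, pow_add, prod_mul_distrib, Fintype.prod_prod_type]
    congr 1
    · have : ∀ i, ∏ c, (x (i, c) * conj (x (i, c))) ^ (if i ∈ S ∧ B i = c then 1 else 0) =
         if i ∈ S then (x (i, B i) * conj (x (i, B i))) else 1 := by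
        intro i
        split_ifs with hi
        · rw [Finset.prod_eq_single (B i)]
          · simp [hi]
          · intro c _ hc; simp [hc.symm]
          · simp
        · simp [hi]
      rw [prod_congr rfl fun i _ => this i]
      simp [prod_mul_distrib]
    · rw [Finset.prod_eq_single i0]
      · simp
      · intro i _ hi; simp [hi]
      · simp
  simp only [h1]
  rw [integral_finsetSum _ fun a _ => h.integrable (by fun_prop), mul_sum]
  refine sum_congr rfl fun m hm => ?_
  have hm' : ∑ c, m c = k := by simpa using hm
  have hsum : ∑ p, Mx m p = #S + k := by
    simp only [hMx, sum_add_distrib, Fintype.sum_prod_type]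
    congr 1
    · have : ∀ i, ∑ c, (if i ∈ S ∧ B i = c then 1 else 0) = if i ∈ S then 1 else 0 := by
        intro i
        split_ifs with hi <;> simp [hi]
      simp [this]
    · rw [Finset.sum_eq_single i0]
      · simpa using hm'
      · intro i _ hi; simp [hi]
      · simp
  have hfac : ∏ p, ((Mx m p).factorial : ℂ) =
      (if i0 ∈ S then (m (B i0) : ℂ) + 1 else 1) * ∏ c, ((m c).factorial : ℂ) := by
    rw [Fintype.prod_prod_type, Finset.prod_eq_single i0]
    · simp only [hMx, if_true]
      split_ifs with hi
      · rw [← mul_prod_erase univ _ (mem_univ (B i0)), ← mul_prod_erase univ (fun c => ((m c).factorial : ℂ)) (mem_univ (B i0)),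
          ← mul_assoc]
        congr 1
        · simp [hi, add_comm 1, Nat.factorial_succ]
        · refine prod_congr rfl fun c hc => ?_
          rw [if_neg (fun hh => (mem_erase.1 hc).1 hh.2.symm), zero_add]
      · simp [hi]
    · intro i _ hi
      refine prod_eq_one fun c _ => ?_
      simp only [hMx, hi, if_false, add_zero]
      split_ifs <;> simp
    · simp
  rw [integral_const_mul, h.moment hs0 (Mx m) _ hsum, hfac]
  have h6 : (∏ i, ((m i).factorial : ℂ)) * Nat.multinomial univ m = k.factorial := by
    have := Nat.multinomial_spec univ m
    rw [hm'] at this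
    exact_mod_cast this
  rw [← h6]
  simp only [Fintype.card_prod, Fintype.card_fin]
  ring

end Page

open MeasureTheory
namespace Page
open Finset ComplexConjugate

theorem count_inj {S : Type*} [Fintype S] [DecidableEq S] (s : ℕ) [∀ b : S → Fin s, Decidable (Function.Injective b)] :
    ∑ b : S → Fin s, (if Function.Injective b then (1:ℂ) else 0) = (s.descFactorial (Fintype.card S) : ℕ) := by
  rw [sum_boole]
  congr 1
  rw [← Fintype.card_subtype, Fintype.card_congr (Equiv.subtypeInjectiveEquivEmbedding S (Fin s)),
    Fintype.card_embedding_eq, Fintype.card_fin]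

theorem count_inj_pt {S : Type*} [Fintype S] [DecidableEq S] (s : ℕ) [∀ b : S → Fin s, Decidable (Function.Injective b)] [NeZero s] (i : S) (f : Fin s → ℂ) :
    (s : ℂ) * ∑ b : S → Fin s, (if Function.Injective b then (1:ℂ) else 0) * f (b i)
      = (s.descFactorial (Fintype.card S) : ℕ) * ∑ c, f c := by
  have h1 : ∀ τ : Fin s, ∑ b : S → Fin s, (if Function.Injective b then (1:ℂ) else 0) * f (b i)
     = ∑ b : S → Fin s, (if Function.Injective b then (1:ℂ) else 0) * f (b i + τ) := by
    intro τ
    rw [← Equiv.sum_comp (Equiv.arrowCongr (Equiv.refl S) (Equiv.addRight τ))]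
    refine sum_congr rfl fun b _ => ?_
    congr 1
    have : Function.Injective ((Equiv.arrowCongr (Equiv.refl S) (Equiv.addRight τ)) b) ↔ Function.Injective b := by
      have e : ((Equiv.arrowCongr (Equiv.refl S) (Equiv.addRight τ)) b) = (Equiv.addRight τ) ∘ b := rfl
      rw [e]
      exact Function.Injective.of_comp_iff (Equiv.injective _) b
    simp only [this]
  have h2 : (s : ℂ) * ∑ b : S → Fin s, (if Function.Injective b then (1:ℂ) else 0) * f (b i)
     = ∑ τ : Fin s, ∑ b : S → Fin s, (if Function.Injective b then (1:ℂ) else 0) * f (b i + τ) := by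
    rw [← sum_congr rfl fun τ _ => h1 τ]
    simp
  rw [h2, sum_comm, ← count_inj, sum_mul]
  refine sum_congr rfl fun b _ => ?_
  rw [← mul_sum]
  congr 1
  exact Equiv.sum_comp (Equiv.addLeft (b i)) f

theorem IsUnif.minorVal {d s : ℕ} {μ : Measure (EuclideanSpace ℂ (Fin d × Fin s))} (h : IsUnif μ) (hs : 0 < s)
    (S : Finset (Fin d)) (i0 : Fin d) (k : ℕ) :
    (s : ℂ) * ∫ x, ((rho x).submatrix (Subtype.val : S → Fin d) (Subtype.val : S → Fin d)).det * rho x i0 i0 ^ k ∂μ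
    = (s.descFactorial #S : ℕ) * (s.ascFactorial k : ℕ) / ((d * s).ascFactorial (#S + k) : ℕ) *
      (if i0 ∈ S then (s : ℂ) + k else s) := by
  classical
  haveI : NeZero s := ⟨hs.ne'⟩
  rw [h.minor]
  set P := piAntidiag (univ : Finset (Fin s)) k with hP
  set K : ℂ := k.factorial / ((d * s).ascFactorial (#S + k) : ℕ) with hK
  have hasc : (k.factorial : ℂ) * #P = (s.ascFactorial k : ℕ) := by
    rw [hP, card_piAnti, Nat.ascFactorial_eq_factorial_mul_choose', Fintype.card_fin]
    push_cast; rfl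
  have h1 : ∀ b : S → Fin s, ∫ x, (∏ i : S, x (i.1, b i) * conj (x (i.1, b i))) * rho x i0 i0 ^ k ∂μ
      = K * ∑ m ∈ P, (if h : i0 ∈ S then (m (b ⟨i0, h⟩) : ℂ) + 1 else 1) := by
    intro b
    have := h.diagTerm S (fun i => if h : i ∈ S then b ⟨i, h⟩ else 0) i0 k
    rw [← hK, ← hP] at this
    refine Eq.trans ?_ (this.trans ?_)
    · refine integral_congr_ae (.of_forall fun x => ?_)
      have e := Finset.prod_coe_sort S (fun i => x (i, if h : i ∈ S then b ⟨i, h⟩ else 0) * conj (x (i, if h : i ∈ S then b ⟨i, h⟩ else 0)))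
      simp only [← e]
      have e2 : ∀ i : S, (if h : i.1 ∈ S then b ⟨i.1, h⟩ else 0) = b i := fun i => by rw [dif_pos i.2]
      simp only [e2]
    · congr 1
      refine sum_congr rfl fun m _ => ?_
      split_ifs <;> rfl
  simp only [h1]
  have h2 : Fintype.card S = #S := Fintype.card_coe S
  by_cases hi : i0 ∈ S
  · simp only [hi, dif_pos, if_pos]
    have h3 := count_inj_pt s (⟨i0, hi⟩ : S) (fun c => K * ∑ m ∈ P, ((m c : ℂ) + 1))
    rw [h3, h2, ← mul_sum, sum_comm]
    have h4 : ∀ m ∈ P, ∑ c, ((m c : ℂ) + 1) = s + k := by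
      intro m hm
      have hm' : ∑ c, m c = k := by simpa [hP] using hm
      rw [sum_add_distrib, ← Nat.cast_sum, hm']
      simp [add_comm]
    rw [sum_congr rfl h4, sum_const, nsmul_eq_mul, hK, ← hasc]
    ring
  · simp only [hi, dif_neg, if_neg, not_false_eq_true, sum_const, nsmul_eq_mul, mul_one]
    rw [← sum_mul, count_inj, h2, hK, ← hasc]
    ring

theorem IsUnif.emVal {d s : ℕ} {μ : Measure (EuclideanSpace ℂ (Fin d × Fin s))} (h : IsUnif μ) (hs : 0 < s)
    (i0 : Fin d) (j k : ℕ) :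
    ((d * s : ℕ) : ℂ) * ∫ x, em (rho x) j * rho x i0 i0 ^ k ∂μ
    = (s.descFactorial j : ℕ) * (s.ascFactorial k : ℕ) * (d.choose j : ℕ) * ((d * s : ℕ) + j * k) /
       ((d * s).ascFactorial (j + k) : ℕ) := by
  have hr := fun i k => continuous_rho (d := d) (s := s) i k
  simp only [em, sum_mul]
  rw [integral_finsetSum _ fun S _ => h.integrable (by
    refine Continuous.mul (Continuous.matrix_det ?_) (by fun_prop)
    refine continuous_matrix fun i k => ?_
    exact hr _ _), Nat.cast_mul, mul_assoc, mul_sum]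
  have h1 : ∀ S ∈ powersetCard j (univ : Finset (Fin d)), (s : ℂ) * ∫ x, ((rho x).submatrix (Subtype.val : S → Fin d) (Subtype.val : S → Fin d)).det * rho x i0 i0 ^ k ∂μ
    = (s.descFactorial j : ℕ) * (s.ascFactorial k : ℕ) / ((d * s).ascFactorial (j + k) : ℕ) *
      (s + k * (if i0 ∈ S then 1 else 0)) := by
    intro S hS
    rw [h.minorVal hs, (mem_powersetCard.1 hS).2]
    split_ifs <;> simp
  rw [sum_congr rfl h1, ← mul_sum, sum_add_distrib, ← mul_sum, sum_const, card_powersetCard, card_univ, Fintype.card_fin]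
  have h2 : ∀ i : Fin d, (∑ S ∈ powersetCard j (univ : Finset (Fin d)), if i ∈ S then (1:ℂ) else 0)
      = ∑ S ∈ powersetCard j (univ : Finset (Fin d)), if i0 ∈ S then (1:ℂ) else 0 := by
    intro i
    refine sum_bij' (fun S _ => S.map (Equiv.swap i i0).toEmbedding) (fun S _ => S.map (Equiv.swap i i0).toEmbedding) ?_ ?_ ?_ ?_ ?_
    · intro S hS; simpa using hS
    · intro S hS; simpa using hS
    · intro S hS; ext a; simp [mem_map_equiv]
    · intro S hS; ext a; simp [mem_map_equiv]
    · intro S hS; simp [mem_map_equiv]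
  have h3 : (d : ℂ) * (∑ S ∈ powersetCard j (univ : Finset (Fin d)), if i0 ∈ S then (1:ℂ) else 0) = j * d.choose j := by
    have : ∑ i : Fin d, (∑ S ∈ powersetCard j (univ : Finset (Fin d)), if i ∈ S then (1:ℂ) else 0) = j * d.choose j := by
      rw [sum_comm]
      have : ∀ S ∈ powersetCard j (univ : Finset (Fin d)), (∑ i : Fin d, if i ∈ S then (1:ℂ) else 0) = j := by
        intro S hS
        simp [(mem_powersetCard.1 hS).2]
      rw [sum_congr rfl this, sum_const, card_powersetCard, card_univ, Fintype.card_fin, nsmul_eq_mul]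
      ring
    rw [← this, sum_congr rfl fun i _ => h2 i]
    simp
  rw [nsmul_eq_mul, mul_left_comm, mul_add, mul_left_comm (d:ℂ) (k:ℂ), h3]
  ring

end Page

open MeasureTheory
namespace Page
open Finset ComplexConjugate
open scoped Kronecker Matrix

theorem em_conj {d : ℕ} (V : Matrix (Fin d) (Fin d) ℂ) (hV : V ∈ unitary (Matrix (Fin d) (Fin d) ℂ))
    (M : Matrix (Fin d) (Fin d) ℂ) (j : ℕ) : em (V * M * star V) j = em M j := by
  by_cases hj : j ≤ Fintype.card (Fin d)
  · have h1 := Matrix.charpoly_coeff_eq_sum_minors (V * M * star V) j hj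
    have h2 := Matrix.charpoly_coeff_eq_sum_minors M j hj
    have h3 : (V * M * star V).charpoly = M.charpoly := by
      rw [Matrix.charpoly_mul_comm, ← mul_assoc, (Unitary.mem_iff.1 hV).1, one_mul]
    rw [h3, h2] at h1
    exact (mul_left_cancel₀ (pow_ne_zero j (by norm_num)) h1).symm
  · have : powersetCard j (univ : Finset (Fin d)) = ∅ := by
      rw [powersetCard_eq_empty]; simpa using hj
    simp [em, this]

theorem em_diag {d : ℕ} (l : Fin d → ℂ) (j : ℕ) : em (Matrix.diagonal l) j = ee l j := by
  rw [em, ee]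
  refine sum_congr rfl fun S _ => ?_
  rw [Matrix.submatrix_diagonal _ _ Subtype.val_injective, Matrix.det_diagonal]
  exact prod_coe_sort S l

theorem spec {d : ℕ} {M : Matrix (Fin d) (Fin d) ℂ} (hM : M.IsHermitian) :
    ∃ W ∈ unitary (Matrix (Fin d) (Fin d) ℂ),
      M = W * Matrix.diagonal (fun i => (hM.eigenvalues i : ℂ)) * star W := by
  refine ⟨hM.eigenvectorUnitary, hM.eigenvectorUnitary.2, ?_⟩
  exact hM.spectral_theorem

theorem em_eig {d : ℕ} {M : Matrix (Fin d) (Fin d) ℂ} (hM : M.IsHermitian) (j : ℕ) :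
    em M j = ee (fun i => (hM.eigenvalues i : ℂ)) j := by
  obtain ⟨W, hW, h⟩ := spec hM
  rw [← em_diag, ← em_conj W hW (Matrix.diagonal _)]
  exact congrArg (fun A => em A j) h

/-- local unitary -/
noncomputable def loc {d : ℕ} (s : ℕ) (V : Matrix (Fin d) (Fin d) ℂ) (hV : V ∈ unitary (Matrix (Fin d) (Fin d) ℂ)) :
    EuclideanSpace ℂ (Fin d × Fin s) ≃ₗᵢ[ℂ] EuclideanSpace ℂ (Fin d × Fin s) :=
  uni (V ⊗ₖ (1 : Matrix (Fin s) (Fin s) ℂ)) (Matrix.kronecker_mem_unitary hV (one_mem _))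

theorem loc_apply {d : ℕ} (s : ℕ) (V : Matrix (Fin d) (Fin d) ℂ) (hV) (x : EuclideanSpace ℂ (Fin d × Fin s)) (i a) :
    loc s V hV x (i, a) = ∑ k, V i k * x (k, a) := by
  rw [loc, uni_apply, Fintype.sum_prod_type]
  refine sum_congr rfl fun k _ => ?_
  simp [Matrix.one_apply]

theorem rho_loc {d : ℕ} (s : ℕ) (V : Matrix (Fin d) (Fin d) ℂ) (hV) (x : EuclideanSpace ℂ (Fin d × Fin s)) :
    rho (loc s V hV x) = V * rho x * star V := by
  have : (Matrix.of fun (i : Fin d) (a : Fin s) => loc s V hV x (i, a)) =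
      V * (Matrix.of fun (i : Fin d) (a : Fin s) => x (i, a)) := by
    ext i a
    simp [loc_apply, Matrix.mul_apply]
  rw [rho, this, rho, Matrix.conjTranspose_mul, Matrix.star_eq_conjTranspose]
  simp only [Matrix.mul_assoc]

/-- quadratic form -/
noncomputable def qf {d : ℕ} (M : Matrix (Fin d) (Fin d) ℂ) (g : Fin d → ℂ) : ℂ := star g ⬝ᵥ (M *ᵥ g)

theorem qf_conj {d : ℕ} (V M : Matrix (Fin d) (Fin d) ℂ) (g : Fin d → ℂ) :
    qf (V * M * star V) g = qf M (star V *ᵥ g) := by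
  rw [qf, qf, Matrix.star_mulVec, ← Matrix.mulVec_mulVec, ← Matrix.mulVec_mulVec, Matrix.dotProduct_mulVec,
    Matrix.star_eq_conjTranspose, Matrix.conjTranspose_conjTranspose]

theorem qf_diag {d : ℕ} (l : Fin d → ℂ) (g : Fin d → ℂ) :
    qf (Matrix.diagonal l) g = ∑ i, l i * (g i * conj (g i)) := by
  rw [qf, dotProduct]
  refine sum_congr rfl fun i _ => ?_
  rw [Matrix.mulVec_diagonal]
  simp; ring

theorem IsUnif.inner_diag {d s : ℕ} {μ : Measure (EuclideanSpace ℂ (Fin d × Fin s))} (h : IsUnif μ)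
    (i0 : Fin d) (a0 : Fin s) (l : Fin d → ℂ) (k : ℕ) :
    ∫ y, qf (Matrix.diagonal l) (fun i => y (i, a0)) ^ k ∂μ
      = k.factorial / ((d * s).ascFactorial k : ℕ) * hh l k := by
  have h1 : ∀ y : EuclideanSpace ℂ (Fin d × Fin s), qf (Matrix.diagonal l) (fun i => y (i, a0)) ^ k
    = ∑ m ∈ piAntidiag (univ : Finset (Fin d)) k, ((Nat.multinomial univ m : ℂ) * ∏ i, l i ^ m i) *
        ∏ p, (y p * conj (y p)) ^ (if p.2 = a0 then m p.1 else 0) := by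
    intro y
    rw [qf_diag, sum_pow_eq_sum_piAntidiag]
    refine sum_congr rfl fun m _ => ?_
    rw [prod_congr rfl fun i _ => mul_pow (l i) _ _, prod_mul_distrib, ← mul_assoc]
    congr 1
    rw [Fintype.prod_prod_type]
    refine prod_congr rfl fun i _ => ?_
    rw [Finset.prod_eq_single a0]
    · simp
    · intro c _ hc; simp [hc]
    · simp
  simp only [h1]
  rw [integral_finsetSum _ fun a _ => h.integrable (by fun_prop), hh, mul_sum]
  refine sum_congr rfl fun m hm => ?_
  have hm' : ∑ c, m c = k := by simpa using hm
  have hsum : ∑ p : Fin d × Fin s, (if p.2 = a0 then m p.1 else 0) = k := by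
    simp [Fintype.sum_prod_type, hm']
  rw [integral_const_mul, h.moment (i0, a0) _ _ hsum]
  have hfac : ∏ p : Fin d × Fin s, ((if p.2 = a0 then m p.1 else 0).factorial : ℂ) = ∏ i, ((m i).factorial : ℂ) := by
    rw [Fintype.prod_prod_type]
    refine prod_congr rfl fun i _ => ?_
    rw [Finset.prod_eq_single a0]
    · simp
    · intro c _ hc; simp [hc]
    · simp
  have h6 : (∏ i, ((m i).factorial : ℂ)) * Nat.multinomial univ m = k.factorial := by
    have := Nat.multinomial_spec univ m
    rw [hm'] at this
    exact_mod_cast this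
  rw [hfac, ← h6]
  simp only [Fintype.card_prod, Fintype.card_fin]
  ring

theorem IsUnif.inner_y {d s : ℕ} {μ : Measure (EuclideanSpace ℂ (Fin d × Fin s))} (h : IsUnif μ)
    (i0 : Fin d) (a0 : Fin s) {M : Matrix (Fin d) (Fin d) ℂ} (hM : M.IsHermitian) (k : ℕ) :
    ∫ y, qf M (fun i => y (i, a0)) ^ k ∂μ
      = k.factorial / ((d * s).ascFactorial k : ℕ) * hh (fun i => (hM.eigenvalues i : ℂ)) k := by
  obtain ⟨W, hW, hMW⟩ := spec hM
  have hW' : star W ∈ unitary (Matrix (Fin d) (Fin d) ℂ) := Unitary.star_mem hW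
  rw [← h.inner_diag i0 a0, ← h.int_inv (loc s (star W) hW') (fun y => qf (Matrix.diagonal _) (fun i => y (i, a0)) ^ k)]
  refine integral_congr_ae (.of_forall fun y => ?_)
  dsimp only
  conv_lhs => rw [hMW]
  rw [qf_conj]
  congr 2
  funext i
  rw [loc_apply]; rfl

theorem IsUnif.inner_x {d s : ℕ} {μ : Measure (EuclideanSpace ℂ (Fin d × Fin s))} (h : IsUnif μ)
    (i0 : Fin d) (g : Fin d → ℂ) (j k : ℕ) :
    ∫ x, em (rho x) j * qf (rho x) g ^ k ∂μ
      = qf 1 g ^ k * ∫ x, em (rho x) j * rho x i0 i0 ^ k ∂μ := by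
  obtain ⟨U, hU⟩ := exists_rot i0 (WithLp.toLp 2 g)
  set W : Matrix (Fin d) (Fin d) ℂ := (Matrix.toEuclideanCLM (n := Fin d) (𝕜 := ℂ)).symm
    (Unitary.linearIsometryEquiv.symm U).1 with hWd
  have hW : W ∈ unitary (Matrix (Fin d) (Fin d) ℂ) := by
    have hu := Unitary.mem_iff.1 (Unitary.linearIsometryEquiv.symm U).2
    have hinj : Function.Injective (Matrix.toEuclideanCLM (n := Fin d) (𝕜 := ℂ)) :=
      (Matrix.toEuclideanCLM (n := Fin d) (𝕜 := ℂ)).injective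
    have e : Matrix.toEuclideanCLM (n := Fin d) (𝕜 := ℂ) W = (Unitary.linearIsometryEquiv.symm U).1 := by
      rw [hWd, StarAlgEquiv.apply_symm_apply]
    rw [← e, ← map_star, ← map_mul, ← map_mul] at hu
    rw [Unitary.mem_iff]
    exact ⟨hinj (hu.1.trans (map_one _).symm), hinj (hu.2.trans (map_one _).symm)⟩
  have hWg : W *ᵥ g = Pi.single i0 (‖WithLp.toLp 2 g‖ : ℂ) := by
    have e : Matrix.toEuclideanCLM (n := Fin d) (𝕜 := ℂ) W (WithLp.toLp 2 g) = U (WithLp.toLp 2 g) := by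
      rw [hWd, StarAlgEquiv.apply_symm_apply]
      rfl
    rw [hU] at e
    have e2 := congrArg WithLp.ofLp e
    rw [Matrix.ofLp_toEuclideanCLM] at e2
    rw [e2]
    ext i
    simp [Pi.single_apply]
  have hW' : star W ∈ unitary (Matrix (Fin d) (Fin d) ℂ) := Unitary.star_mem hW
  have h1 : qf 1 g = (‖WithLp.toLp 2 g‖ : ℂ) ^ 2 := by
    have : (1 : Matrix (Fin d) (Fin d) ℂ) = star W * 1 * star (star W) := by
      rw [mul_one, star_star, (Unitary.mem_iff.1 hW).1]
    rw [this, qf_conj, star_star, hWg, qf, Matrix.one_mulVec]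
    simp [Pi.single_apply, dotProduct, sq]
  rw [← h.int_inv (loc s (star W) hW'), ← integral_const_mul]
  refine integral_congr_ae (.of_forall fun x => ?_)
  dsimp only
  rw [rho_loc, em_conj _ hW', qf_conj, star_star, hWg, h1]
  have : qf (rho x) (Pi.single i0 (‖WithLp.toLp 2 g‖ : ℂ)) = (‖WithLp.toLp 2 g‖ : ℂ) ^ 2 * rho x i0 i0 := by
    rw [qf, dotProduct, Finset.sum_eq_single i0]
    · simp [Matrix.mulVec_single]
      ring
    · intro i _ hi; simp [hi]
    · simp
  rw [this]; ring

theorem rho_herm {d s : ℕ} (x : EuclideanSpace ℂ (Fin d × Fin s)) : (rho x).IsHermitian :=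
  Matrix.isHermitian_mul_conjTranspose_self _

theorem continuous_rho' {d s : ℕ}  :
    Continuous fun x : EuclideanSpace ℂ (Fin d × Fin s) => rho x := 
  continuous_matrix fun i k => continuous_rho i k

theorem continuous_em {d s : ℕ} (j : ℕ) :
    Continuous fun x : EuclideanSpace ℂ (Fin d × Fin s) => em (rho x) j := by
  unfold em
  refine continuous_finsetSum _ fun S _ => Continuous.matrix_det ?_
  refine continuous_matrix fun i k => ?_
  exact continuous_rho _ _

theorem IsUnif.eh {d s : ℕ} {μ : Measure (EuclideanSpace ℂ (Fin d × Fin s))} (h : IsUnif μ)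
    (i0 : Fin d) (a0 : Fin s) (j k : ℕ) :
    Integrable (fun x => ee (fun i => ((rho_herm x).eigenvalues i : ℂ)) j * hh (fun i => ((rho_herm x).eigenvalues i : ℂ)) k) μ ∧
    ∫ x, ee (fun i => ((rho_herm x).eigenvalues i : ℂ)) j * hh (fun i => ((rho_herm x).eigenvalues i : ℂ)) k ∂μ
     = (d + k - 1).choose k * ∫ x, em (rho x) j * rho x i0 i0 ^ k ∂μ := by
  have := h.prob
  set κ : ℂ := k.factorial / ((d * s).ascFactorial k : ℕ) with hκ
  have hpos : 0 < d * s := Nat.mul_pos (Fin.pos i0) (Fin.pos a0)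
  have hκ0 : κ ≠ 0 := by
    rw [hκ]
    refine div_ne_zero (by exact_mod_cast Nat.factorial_ne_zero k) ?_
    have : (d * s).ascFactorial k ≠ 0 := by
      obtain ⟨n, hn⟩ : ∃ n, d * s = n + 1 := ⟨d * s - 1, by omega⟩
      rw [hn]; exact (Nat.ascFactorial_pos n k).ne'
    exact_mod_cast this
  set F : EuclideanSpace ℂ (Fin d × Fin s) → EuclideanSpace ℂ (Fin d × Fin s) → ℂ :=
    fun x y => em (rho x) j * qf (rho x) (fun i => y (i, a0)) ^ k with hF
  have hFc : Continuous (Function.uncurry F) := by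
    simp only [hF, Function.uncurry_def, qf, dotProduct, Matrix.mulVec]
    have h1 : Continuous fun p : EuclideanSpace ℂ (Fin d × Fin s) × EuclideanSpace ℂ (Fin d × Fin s) => em (rho p.1) j :=
      (continuous_em j).comp continuous_fst
    have h2 : ∀ i k, Continuous fun p : EuclideanSpace ℂ (Fin d × Fin s) × EuclideanSpace ℂ (Fin d × Fin s) => rho p.1 i k :=
      fun i k => (continuous_rho i k).comp continuous_fst
    simp only [Pi.star_apply]
    fun_prop
  have hFi : Integrable (Function.uncurry F) (μ.prod μ) := by
    obtain ⟨C, hC⟩ := ((isCompact_sphere (0 : EuclideanSpace ℂ (Fin d × Fin s)) 1).prod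
      (isCompact_sphere (0 : EuclideanSpace ℂ (Fin d × Fin s)) 1)).exists_bound_of_continuousOn hFc.continuousOn
    refine Integrable.of_bound hFc.aestronglyMeasurable C ?_
    have : Metric.sphere (0 : EuclideanSpace ℂ (Fin d × Fin s)) 1 ×ˢ Metric.sphere (0 : EuclideanSpace ℂ (Fin d × Fin s)) 1
       ∈ ae (μ.prod μ) := by
      rw [mem_ae_iff_prob_eq_one (Metric.isClosed_sphere.measurableSet.prod Metric.isClosed_sphere.measurableSet),
        Measure.prod_prod, h.sph, one_mul]
    filter_upwards [this] with p hp using hC p hp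
  have hx : ∀ x, ∫ y, F x y ∂μ = κ * (ee (fun i => ((rho_herm x).eigenvalues i : ℂ)) j * hh (fun i => ((rho_herm x).eigenvalues i : ℂ)) k) := by
    intro x
    simp only [hF]
    rw [integral_const_mul, h.inner_y i0 a0 (rho_herm x), ← em_eig]
    ring
  constructor
  · have := hFi.integral_prod_left
    simp only [Function.uncurry_apply_pair, hx] at this
    have h2 := this.const_mul κ⁻¹
    simpa [inv_mul_cancel_left₀ hκ0] using h2
  · apply mul_left_cancel₀ hκ0
    rw [← integral_const_mul]
    simp only [← hx]
    rw [integral_integral_swap hFi]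
    simp only [hF, h.inner_x i0]
    rw [integral_mul_const]
    have := h.inner_diag i0 a0 (fun _ => 1) k
    rw [Matrix.diagonal_one] at this
    rw [this, ← hκ]
    have : hh (fun _ : Fin d => (1:ℂ)) k = (d + k - 1).choose k := by
      simp [hh, card_piAnti]
    rw [this]; ring

theorem IsUnif.power {d s : ℕ} {μ : Measure (EuclideanSpace ℂ (Fin d × Fin s))} (h : IsUnif μ)
    (i0 : Fin d) (a0 : Fin s) (n : ℕ) (hn : 1 ≤ n) :
    ((d * s : ℕ) : ℂ) * ∫ x, ∑ i, ((rho_herm x).eigenvalues i : ℂ) ^ n ∂μ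
     = ∑ p ∈ antidiagonal n, (-1 : ℂ) ^ (p.1 + 1) * p.1 * (d + p.2 - 1).choose p.2 * 
       ((s.descFactorial p.1 : ℕ) * (s.ascFactorial p.2 : ℕ) * (d.choose p.1 : ℕ) * ((d * s : ℕ) + p.1 * p.2) /
       ((d * s).ascFactorial n : ℕ)) := by
  simp only [newton _ n hn, mul_assoc _ (ee _ _) (hh _ _)]
  rw [integral_finsetSum _ fun p _ => (h.eh i0 a0 p.1 p.2).1.const_mul _, mul_sum]
  refine sum_congr rfl fun p hp => ?_
  rw [← (mem_antidiagonal.1 hp), ← h.emVal (Fin.pos a0) i0, integral_const_mul, (h.eh i0 a0 p.1 p.2).2]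
  ring

end Page

open MeasureTheory
namespace Page
open Finset

/-- coefficient -/
noncomputable def aj (d s j : ℕ) : ℝ :=
  (-1) ^ (j + 1) * (d - 1).choose (j - 1) * (d * s - 1).factorial / ((s - j).factorial * (d - 1).factorial)

/-- numerator -/
noncomputable def Pj (d s j : ℕ) (z : ℝ) : ℝ :=
  (∏ i ∈ range (d - 1), (z - j + 1 + i)) * ((d * s : ℕ) + j * (z - j))

/-- the `j`-th term -/
noncomputable def Tj (d s j : ℕ) (z : ℝ) : ℝ :=
  aj d s j * (Pj d s j z / ∏ p ∈ Ico (s - j) (d * s), (z + p))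

theorem prod_asc (n m N : ℕ) (hn : 1 ≤ n) (hm : m ≤ N) :
    ((n + m - 1).factorial : ℝ) * ∏ p ∈ Ico m N, ((n : ℝ) + p) = (n + N - 1).factorial := by
  have h1 := prod_range_mul_prod_Ico (fun p => n + p) hm
  rw [← Nat.ascFactorial_eq_prod_range, ← Nat.ascFactorial_eq_prod_range] at h1
  have h2 := Nat.factorial_mul_ascFactorial' n m hn
  have h3 := Nat.factorial_mul_ascFactorial' n N hn
  rw [← h2, ← h3, ← h1]
  push_cast; ring

theorem term_eq (d s j k : ℕ) (hj : 1 ≤ j) (hjd : j ≤ d) (hds : d ≤ s) :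
    (-1 : ℝ) ^ (j + 1) * j * (d + k - 1).choose k * 
       ((s.descFactorial j : ℕ) * (s.ascFactorial k : ℕ) * (d.choose j : ℕ) * ((d * s : ℕ) + j * k) /
       ((d * s).ascFactorial (j + k) : ℕ)) = (d * s : ℕ) * Tj d s j ((j + k : ℕ) : ℝ) := by
  obtain ⟨j, rfl⟩ : ∃ j', j = j' + 1 := ⟨j - 1, by omega⟩
  obtain ⟨d, rfl⟩ : ∃ d', d = d' + 1 := ⟨d - 1, by omega⟩
  obtain ⟨t, rfl⟩ : ∃ t, s = t + (j + 1) := ⟨s - (j + 1), by omega⟩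
  set s := t + (j + 1) with hs
  set N := (d + 1) * s with hN
  have hN1 : 1 ≤ N := Nat.mul_pos (by omega) (by omega)
  have hsN : s ≤ N := Nat.le_mul_of_pos_left _ (by omega)
  have e1 : (((d + 1).choose (j + 1) : ℕ) : ℝ) * (j + 1 : ℕ) = (d + 1) * d.choose j := by
    have := Nat.add_one_mul_choose_eq d j
    exact_mod_cast this.symm
  have e2 : (((d + 1 + k - 1).choose k : ℕ) : ℝ) * d.factorial = ∏ i ∈ range d, ((k : ℝ) + 1 + i) := by
    have h1 := Nat.ascFactorial_eq_factorial_mul_choose k d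
    rw [Nat.ascFactorial_eq_prod_range] at h1
    have h2 : (d + 1 + k - 1).choose k = (k + d).choose d := by
      rw [show d + 1 + k - 1 = k + d by omega, Nat.choose_symm_add]
    rw [h2, mul_comm]
    have := congrArg (Nat.cast : ℕ → ℝ) h1
    push_cast at this
    rw [this]
  have e3 : ((t.factorial : ℕ) : ℝ) * s.descFactorial (j + 1) = s * (s - 1).factorial := by
    have h1 := Nat.factorial_mul_descFactorial (n := s) (k := j + 1) (by omega)
    rw [show s - (j + 1) = t by omega] at h1
    have h2 := Nat.mul_factorial_pred (n := s) (by omega)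
    exact_mod_cast h1.trans h2.symm
  have e4 : (((s - 1).factorial : ℕ) : ℝ) * s.ascFactorial k = (s + k - 1).factorial := by
    exact_mod_cast Nat.factorial_mul_ascFactorial' s k (by omega)
  have e5 : (((N - 1).factorial : ℕ) : ℝ) * N.ascFactorial (j + 1 + k) = (N + (j + 1 + k) - 1).factorial := by
    exact_mod_cast Nat.factorial_mul_ascFactorial' N (j + 1 + k) (by omega)
  have e6 := prod_asc (j + 1 + k) t N (by omega) (by omega)
  rw [show j + 1 + k + t - 1 = s + k - 1 by omega, show j + 1 + k + N - 1 = N + (j + 1 + k) - 1 by omega, ← e4, ← e5] at e6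
  have p1 : ((t.factorial : ℕ) : ℝ) ≠ 0 := by positivity
  have p2 : ((d.factorial : ℕ) : ℝ) ≠ 0 := by positivity
  have p3 : (((s - 1).factorial : ℕ) : ℝ) ≠ 0 := by positivity
  have p4 : (((N - 1).factorial : ℕ) : ℝ) ≠ 0 := by positivity
  have p5 : ((N.ascFactorial (j + 1 + k) : ℕ) : ℝ) ≠ 0 := by
    have : N.ascFactorial (j + 1 + k) ≠ 0 := by
      obtain ⟨n, hn⟩ : ∃ n, N = n + 1 := ⟨N - 1, by omega⟩
      rw [hn]; exact (Nat.ascFactorial_pos n _).ne'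
    exact_mod_cast this
  have p6 : ∏ p ∈ Ico t N, (((j + 1 + k : ℕ) : ℝ) + p) ≠ 0 := by
    refine prod_ne_zero_iff.2 fun p _ => ?_
    positivity
  rw [Tj, aj, Pj, ← hN]
  simp only [Nat.add_sub_cancel]
  rw [show s - (j + 1) = t by omega]
  have e7 : ∀ i : ℕ, (((j + 1 + k : ℕ) : ℝ) - ((j + 1 : ℕ) : ℝ) + 1 + i) = (k : ℝ) + 1 + i := by
    intro i; push_cast; ring
  have e8 : (((j + 1 + k : ℕ) : ℝ) - ((j + 1 : ℕ) : ℝ)) = k := by push_cast; ring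
  simp only [e8]
  rw [← e2]
  set Q := ∏ p ∈ Ico t N, (((j + 1 + k : ℕ) : ℝ) + p) with hQ
  have eN : (N : ℝ) = (d + 1) * s := by rw [hN]; push_cast; ring
  have key : ((s.descFactorial (j + 1) : ℕ) : ℝ) * s.ascFactorial k * (((d + 1).choose (j + 1) : ℕ) * (j + 1 : ℕ)) * (t.factorial * Q)
     = N * (N.ascFactorial (j + 1 + k)) * (d.choose j * (N - 1).factorial) := by
    rw [e1, eN]
    linear_combination (s.ascFactorial k * ((d + 1) * d.choose j) * Q : ℝ) * e3 + ((d + 1) * d.choose j : ℝ) * s * e6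
  field_simp
  linear_combination ((d + 1 + k - 1).choose k : ℝ) * key

theorem Tj_zero (d s j n : ℕ) (hjd : j ≤ d) (hn : n < j) (hn1 : 1 ≤ n) : Tj d s j n = 0 := by
  have : ∏ i ∈ range (d - 1), ((n : ℝ) - j + 1 + i) = 0 := by
    refine prod_eq_zero (i := j - 1 - n) (by simp; omega) ?_
    rw [Nat.cast_sub (by omega), Nat.cast_sub (by omega)]
    push_cast; ring
  simp [Tj, Pj, this]

theorem IsUnif.power_real {d s : ℕ} (hds : d ≤ s) {μ : Measure (EuclideanSpace ℂ (Fin d × Fin s))} (h : IsUnif μ)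
    (i0 : Fin d) (a0 : Fin s) (n : ℕ) (hn : 1 ≤ n) :
    ∫ x, ∑ i, ((rho_herm x).eigenvalues i) ^ n ∂μ = ∑ j ∈ Icc 1 d, Tj d s j n := by
  have h1 := h.power i0 a0 n hn
  have h2 : ∫ x, ∑ i, ((rho_herm x).eigenvalues i : ℂ) ^ n ∂μ = ((∫ x, ∑ i, ((rho_herm x).eigenvalues i) ^ n ∂μ : ℝ) : ℂ) := by
    rw [← integral_complex_ofReal]
    push_cast
    rfl
  rw [h2] at h1
  have hpos : 0 < d * s := Nat.mul_pos (Fin.pos i0) (Fin.pos a0)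
  have h3 : ((d * s : ℕ) : ℝ) * ∫ x, ∑ i, ((rho_herm x).eigenvalues i) ^ n ∂μ
     = ∑ p ∈ antidiagonal n, (-1 : ℝ) ^ (p.1 + 1) * p.1 * (d + p.2 - 1).choose p.2 * 
       ((s.descFactorial p.1 : ℕ) * (s.ascFactorial p.2 : ℕ) * (d.choose p.1 : ℕ) * ((d * s : ℕ) + p.1 * p.2) /
       ((d * s).ascFactorial n : ℕ)) := by
    apply Complex.ofReal_injective
    rw [Complex.ofReal_mul, Complex.ofReal_natCast, h1, Complex.ofReal_sum]
    refine sum_congr rfl fun p _ => ?_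
    push_cast
    rfl
  rw [Nat.sum_antidiagonal_eq_sum_range_succ_mk] at h3
  have hne : ((d * s : ℕ) : ℝ) ≠ 0 := by exact_mod_cast hpos.ne'
  apply mul_left_cancel₀ hne
  rw [h3]
  have sub1 : (Icc 1 d).filter (· ≤ n) ⊆ range (n + 1) := by
    intro j hj; simp at hj ⊢; omega
  have sub2 : (Icc 1 d).filter (· ≤ n) ⊆ Icc 1 d := filter_subset _ _
  rw [← sum_subset sub1, ← sum_subset sub2, mul_sum]
  · refine sum_congr rfl fun j hj => ?_
    simp only [mem_filter, mem_Icc] at hj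
    have := term_eq d s j (n - j) hj.1.1 hj.1.2 hds
    rw [show j + (n - j) = n by omega] at this
    exact this
  · intro j hj hj2
    simp only [mem_filter, mem_Icc] at hj hj2
    exact Tj_zero d s j n hj.2 (by omega) hn
  · intro j hj hj2
    simp only [mem_filter, mem_Icc, mem_range] at hj hj2
    rcases Nat.eq_zero_or_pos j with h0 | h0
    · simp [h0]
    · have : d < j := by omega
      simp [Nat.choose_eq_zero_of_lt this]

end Page

open MeasureTheory
namespace Page
open Finset

/-- moments given by a density -/
def Good (T : ℕ → ℝ) (D : ℝ) : Prop :=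
  ∃ w : ℝ → ℝ, Continuous w ∧ (∀ n : ℕ, 1 ≤ n → ∫ x in (0:ℝ)..1, x ^ n * w x = T n) ∧
    ∫ x in (0:ℝ)..1, Real.negMulLog x * w x = D

theorem Good.sum {ι : Type*} (S : Finset ι) (T : ι → ℕ → ℝ) (D : ι → ℝ) (h : ∀ i ∈ S, Good (T i) (D i)) :
    Good (fun n => ∑ i ∈ S, T i n) (∑ i ∈ S, D i) := by
  choose! w hw1 hw2 hw3 using h
  refine ⟨fun x => ∑ i ∈ S, w i x, continuous_finsetSum _ hw1, ?_, ?_⟩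
  · intro n hn
    simp only [mul_sum]
    rw [intervalIntegral.integral_finsetSum]
    · exact sum_congr rfl fun i hi => hw2 i hi n hn
    · intro i hi
      have := hw1 i hi
      exact Continuous.intervalIntegrable (by fun_prop) _ _
  · simp only [mul_sum]
    rw [intervalIntegral.integral_finsetSum]
    · exact sum_congr rfl fun i hi => hw3 i hi
    · intro i hi
      have := hw1 i hi
      have := Real.continuous_negMulLog
      exact Continuous.intervalIntegrable (by fun_prop) _ _

theorem pfrac (A : Finset ℕ) (P : Polynomial ℝ) (hdeg : P.degree < #A) :
    ∃ c : ℕ → ℝ, (P.eval 0 = 0 → c 0 = 0) ∧ ∀ z : ℝ, (∀ p ∈ A, z + p ≠ 0) →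
      P.eval z / ∏ p ∈ A, (z + p) = ∑ p ∈ A, c p / (z + p) := by
  set v : ℕ → ℝ := fun p => -(p : ℝ) with hv
  have hvs : Set.InjOn v A := by
    intro a _ b _ hab
    simpa [hv] using hab
  refine ⟨fun p => Lagrange.nodalWeight A v p * P.eval (v p), ?_, ?_⟩
  · intro h; simp [hv, h]
  · intro z hz
    have h1 := Lagrange.eq_interpolate hvs hdeg
    have h2 := Lagrange.eval_interpolate_not_at_node (s := A) (v := v) (x := z) (fun i => P.eval (v i)) (by
      intro i hi h
      apply hz i hi
      rw [h, hv]; simp)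
    rw [← h1, Lagrange.eval_nodal] at h2
    have h3 : ∏ i ∈ A, (z - v i) = ∏ p ∈ A, (z + p) := by simp [hv]
    rw [h3] at h2
    rw [h2, mul_div_cancel_left₀ _ (prod_ne_zero_iff.2 hz)]
    refine sum_congr rfl fun p hp => ?_
    rw [hv, sub_neg_eq_add]
    ring

theorem int_nml (p : ℕ) : ∫ x in (0:ℝ)..1, Real.negMulLog x * x ^ p = 1 / ((1 : ℝ) + (p + 1)) ^ 2 := by
  have hc := Real.continuous_negMulLog
  rw [intervalIntegral.integral_eq_sub_of_hasDerivAt_of_le zero_le_one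
    (f := fun x => Real.negMulLog x * x ^ (p + 1) / (p + 2) + x ^ (p + 2) / (p + 2) ^ 2)]
  · simp
    ring
  · exact Continuous.continuousOn (by fun_prop)
  · intro x hx
    have h1 := Real.hasDerivAt_negMulLog hx.1.ne'
    have h2 := ((h1.mul (hasDerivAt_pow (p + 1) x)).div_const ((p : ℝ) + 2)).add
      ((hasDerivAt_pow (p + 2) x).div_const (((p : ℝ) + 2) ^ 2))
    refine h2.congr_deriv ?_
    rw [Real.negMulLog]
    have : (p : ℝ) + 2 ≠ 0 := by positivity
    push_cast
    field_simp
    ring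
  · exact Continuous.intervalIntegrable (by fun_prop) _ _

theorem good_pf (A : Finset ℕ) (P : Polynomial ℝ) (hdeg : P.degree < #A) (h0 : 0 ∈ A → P.eval 0 = 0) (D : ℝ)
    (hD : HasDerivAt (fun z : ℝ => P.eval z / ∏ p ∈ A, (z + p)) (-D) 1) :
    Good (fun n => P.eval (n : ℝ) / ∏ p ∈ A, ((n : ℝ) + p)) D := by
  obtain ⟨c, hc0, hc⟩ := pfrac A P hdeg
  have hc0' : ∀ p ∈ A, c p ≠ 0 → 1 ≤ p := by
    intro p hp hcp
    by_contra hlt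
    have : p = 0 := by omega
    subst this
    exact hcp (hc0 (h0 hp))
  refine ⟨fun x => ∑ p ∈ A, c p * x ^ (p - 1), by fun_prop, ?_, ?_⟩
  · intro n hn
    dsimp only
    rw [hc n (fun p _ => by positivity)]
    simp only [mul_sum]
    rw [intervalIntegral.integral_finsetSum fun p _ => Continuous.intervalIntegrable (by fun_prop) _ _]
    refine sum_congr rfl fun p hp => ?_
    by_cases hcp : c p = 0
    · simp [hcp]
    · have hp1 := hc0' p hp hcp
      have : ∀ x : ℝ, x ^ n * (c p * x ^ (p - 1)) = c p * x ^ (n + p - 1) := by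
        intro x
        rw [Nat.add_sub_assoc hp1, pow_add]; ring
      simp only [this]
      rw [intervalIntegral.integral_const_mul, integral_pow]
      rw [show n + p - 1 + 1 = n + p by omega]
      have e : (((n + p - 1 : ℕ) : ℝ) + 1) = n + p := by
        rw [Nat.cast_sub (by omega)]; push_cast; ring
      rw [e, one_pow, zero_pow (by omega)]
      ring
  · simp only [mul_sum]
    have hcont := Real.continuous_negMulLog
    rw [intervalIntegral.integral_finsetSum fun p _ => Continuous.intervalIntegrable (by fun_prop) _ _]
    have h1 : HasDerivAt (fun z : ℝ => ∑ p ∈ A, c p / (z + p)) (∑ p ∈ A, -(c p / (1 + p) ^ 2)) 1 := by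
      refine HasDerivAt.fun_sum fun p _ => ?_
      have := (((hasDerivAt_id (1:ℝ)).add_const (p:ℝ)).inv (by simp; positivity)).const_mul (c p)
      refine (this.congr_deriv ?_).congr_of_eventuallyEq ?_
      · simp; ring
      · exact Filter.Eventually.of_forall fun z => by simp [div_eq_mul_inv]
    have h2 : (fun z : ℝ => P.eval z / ∏ p ∈ A, (z + p)) =ᶠ[nhds 1] fun z => ∑ p ∈ A, c p / (z + p) := by
      filter_upwards [lt_mem_nhds (show (0:ℝ) < 1 by norm_num)] with z hz
      exact hc z fun p _ => by positivity
    have h3 := hD.unique (h1.congr_of_eventuallyEq h2)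
    rw [sum_neg_distrib, neg_inj] at h3
    rw [h3]
    refine sum_congr rfl fun p hp => ?_
    by_cases hcp : c p = 0
    · simp [hcp]
    · have hp1 := hc0' p hp hcp
      have : ∀ x : ℝ, Real.negMulLog x * (c p * x ^ (p - 1)) = c p * (Real.negMulLog x * x ^ (p - 1)) := by
        intro x; ring
      simp only [this]
      rw [intervalIntegral.integral_const_mul, int_nml, Nat.cast_sub hp1]
      push_cast
      ring

theorem trace_pow {d : ℕ} {M : Matrix (Fin d) (Fin d) ℂ} (hM : M.IsHermitian) (n : ℕ) :
    ∑ i, hM.eigenvalues i ^ n = ((M ^ n).trace).re := by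
  obtain ⟨W, hW, h⟩ := spec hM
  set l := fun i => (hM.eigenvalues i : ℂ) with hl
  have hWW := (Unitary.mem_iff.1 hW).1
  have h1 : ∀ n, M ^ n * W = W * Matrix.diagonal (fun i => l i ^ n) := by
    intro n
    induction n with
    | zero => simp
    | succ n ih =>
      have : M * W = W * Matrix.diagonal l := by
        conv_lhs => rw [h]
        rw [mul_assoc, hWW, mul_one]
      rw [pow_succ, mul_assoc, this, ← mul_assoc, ih, mul_assoc, Matrix.diagonal_mul_diagonal]
      simp only [pow_succ]
  have h2 : (M ^ n).trace = ∑ i, l i ^ n := by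
    have : M ^ n = M ^ n * W * star W := by rw [mul_assoc, (Unitary.mem_iff.1 hW).2, mul_one]
    rw [this, h1, Matrix.trace_mul_comm, ← mul_assoc, hWW, one_mul, Matrix.trace_diagonal]
  rw [h2, hl, Complex.re_sum]
  refine sum_congr rfl fun i _ => ?_
  dsimp only
  rw [← Complex.ofReal_pow, Complex.ofReal_re]

open scoped ComplexOrder in
theorem eig_mem {d s : ℕ} (x : EuclideanSpace ℂ (Fin d × Fin s)) (hx : x ∈ Metric.sphere (0 : EuclideanSpace ℂ (Fin d × Fin s)) 1) :
    ∑ i, (rho_herm x).eigenvalues i = 1 ∧ ∀ i, (rho_herm x).eigenvalues i ∈ Set.Icc (0:ℝ) 1 := by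
  have h0 : ∀ i, 0 ≤ (rho_herm x).eigenvalues i :=
    (Matrix.posSemidef_self_mul_conjTranspose (Matrix.of fun (i : Fin d) (a : Fin s) => x (i, a))).eigenvalues_nonneg
  have h1 : ∑ i, (rho_herm x).eigenvalues i = 1 := by
    have h2 := trace_pow (rho_herm x) 1
    simp only [pow_one] at h2
    rw [h2]
    have hn : ‖x‖ ^ 2 = 1 := by
      rw [mem_sphere_zero_iff_norm.1 hx]; norm_num
    rw [EuclideanSpace.norm_sq_eq, Fintype.sum_prod_type] at hn
    rw [← hn, Matrix.trace, Complex.re_sum]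
    refine sum_congr rfl fun i _ => ?_
    rw [Matrix.diag_apply, rho_apply, Complex.re_sum]
    refine sum_congr rfl fun a _ => ?_
    rw [Complex.mul_conj, Complex.ofReal_re, Complex.normSq_eq_norm_sq]
  refine ⟨h1, fun i => ⟨h0 i, ?_⟩⟩
  rw [← h1]
  exact single_le_sum (f := fun i => (rho_herm x).eigenvalues i) (fun i _ => h0 i) (mem_univ i)

theorem IsUnif.ext_nml {d s : ℕ} {μ : Measure (EuclideanSpace ℂ (Fin d × Fin s))} (h : IsUnif μ)
    (T : ℕ → ℝ) (D : ℝ) (hT : Good T D)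
    (hp : ∀ n : ℕ, 1 ≤ n → ∫ x, ∑ i, ((rho_herm x).eigenvalues i) ^ n ∂μ = T n) :
    ∫ x, ∑ i, Real.negMulLog ((rho_herm x).eigenvalues i) ∂μ = D := by
  have hprob := h.prob
  have hnc := Real.continuous_negMulLog
  obtain ⟨w, hw1, hw2, hw3⟩ := hT
  have hq : ∀ m : ℕ, ∃ q : Polynomial ℝ, q.eval 0 = 0 ∧ ∀ x ∈ Set.Icc (0:ℝ) 1, |q.eval x - Real.negMulLog x| ≤ 2 / ((m:ℝ) + 1) := by
    intro m
    obtain ⟨p, hp⟩ := exists_polynomial_near_of_continuousOn 0 1 Real.negMulLog hnc.continuousOn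
      (1 / ((m:ℝ) + 1)) (by positivity)
    refine ⟨p - Polynomial.C (p.eval 0), by simp, ?_⟩
    intro x hx
    have h1 := hp x hx
    have h2 := hp 0 (by simp)
    rw [Real.negMulLog_zero] at h2
    have e : 2 / ((m:ℝ) + 1) = 1 / ((m:ℝ) + 1) + 1 / ((m:ℝ) + 1) := by ring
    rw [e, Polynomial.eval_sub, Polynomial.eval_C]
    rw [abs_lt] at h1 h2
    rw [abs_le]
    constructor <;> linarith
  choose q hq0 hq1 using hq
  have hint : ∀ n : ℕ, Integrable (fun x => ∑ i, ((rho_herm x).eigenvalues i) ^ n) μ := by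
    intro n
    apply h.integrable
    simp only [trace_pow]
    have := continuous_rho' (d := d) (s := s)
    exact Complex.continuous_re.comp (Continuous.matrix_trace (this.pow n))
  have hpoly : ∀ m, ∫ x, ∑ i, (q m).eval ((rho_herm x).eigenvalues i) ∂μ = ∫ x in (0:ℝ)..1, (q m).eval x * w x := by
    intro m
    have e1 : ∀ x : EuclideanSpace ℂ (Fin d × Fin s), ∑ i, (q m).eval ((rho_herm x).eigenvalues i)
      = ∑ n ∈ range ((q m).natDegree + 1), (q m).coeff n * ∑ i, ((rho_herm x).eigenvalues i) ^ n := by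
      intro x
      simp only [Polynomial.eval_eq_sum_range, mul_sum]
      rw [sum_comm]
    have e2 : ∀ x : ℝ, (q m).eval x * w x
      = ∑ n ∈ range ((q m).natDegree + 1), (q m).coeff n * (x ^ n * w x) := by
      intro x
      simp only [Polynomial.eval_eq_sum_range, sum_mul, mul_assoc]
    simp only [e1, e2]
    rw [integral_finsetSum _ fun n _ => (hint n).const_mul _,
      intervalIntegral.integral_finsetSum fun n _ => Continuous.intervalIntegrable (by fun_prop) _ _]
    refine sum_congr rfl fun n _ => ?_
    rw [integral_const_mul, intervalIntegral.integral_const_mul]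
    rcases Nat.eq_zero_or_pos n with hn | hn
    · have : (q m).coeff 0 = 0 := by rw [Polynomial.coeff_zero_eq_eval_zero, hq0]
      simp [hn, this]
    · rw [hp n hn, hw2 n hn]
  obtain ⟨B, hB⟩ := (isCompact_Icc (a := (0:ℝ)) (b := 1)).exists_bound_of_continuousOn hnc.continuousOn
  have hlim0 : Filter.Tendsto (fun m : ℕ => 2 / ((m:ℝ) + 1)) Filter.atTop (nhds 0) := by
    have := (tendsto_one_div_add_atTop_nhds_zero_nat (𝕜 := ℝ)).const_mul 2
    simpa [div_eq_mul_inv] using this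
  have hlim : ∀ x ∈ Set.Icc (0:ℝ) 1, Filter.Tendsto (fun m => (q m).eval x) Filter.atTop (nhds (Real.negMulLog x)) := by
    intro x hx
    rw [tendsto_iff_dist_tendsto_zero]
    refine squeeze_zero (fun _ => dist_nonneg) (fun m => ?_) hlim0
    rw [Real.dist_eq]
    exact hq1 m x hx
  have hbd : ∀ m, ∀ x ∈ Set.Icc (0:ℝ) 1, ‖(q m).eval x‖ ≤ 2 + B := by
    intro m x hx
    have h1 := hq1 m x hx
    have h2 := hB x hx
    have h3 : 2 / ((m:ℝ) + 1) ≤ 2 := by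
      rw [div_le_iff₀ (by positivity)]
      have : (0:ℝ) ≤ m := by positivity
      linarith
    have h4 : (q m).eval x = ((q m).eval x - Real.negMulLog x) + Real.negMulLog x := by ring
    rw [h4]
    refine (norm_add_le _ _).trans ?_
    simp only [Real.norm_eq_abs] at *
    linarith
  have L1 : Filter.Tendsto (fun m => ∫ x, ∑ i, (q m).eval ((rho_herm x).eigenvalues i) ∂μ) Filter.atTop
      (nhds (∫ x, ∑ i, Real.negMulLog ((rho_herm x).eigenvalues i) ∂μ)) := by
    refine tendsto_integral_of_dominated_convergence (fun _ => ∑ i : Fin d, (2 + B)) ?_ (integrable_const _) ?_ ?_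
    · intro m
      have e1 : ∀ x : EuclideanSpace ℂ (Fin d × Fin s), ∑ i, (q m).eval ((rho_herm x).eigenvalues i)
        = ∑ n ∈ range ((q m).natDegree + 1), (q m).coeff n * ∑ i, ((rho_herm x).eigenvalues i) ^ n := by
        intro x
        simp only [Polynomial.eval_eq_sum_range, mul_sum]
        rw [sum_comm]
      simp only [e1]
      exact (integrable_finsetSum _ fun n _ => (hint n).const_mul _).aestronglyMeasurable
    · intro m
      filter_upwards [h.ae_sph] with x hx
      exact norm_sum_le_of_le _ fun i _ => hbd m _ ((eig_mem x hx).2 i)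
    · filter_upwards [h.ae_sph] with x hx
      exact tendsto_finsetSum _ fun i _ => hlim _ ((eig_mem x hx).2 i)
  have L2 : Filter.Tendsto (fun m => ∫ x in (0:ℝ)..1, (q m).eval x * w x) Filter.atTop
      (nhds (∫ x in (0:ℝ)..1, Real.negMulLog x * w x)) := by
    refine intervalIntegral.tendsto_integral_filter_of_dominated_convergence (fun x => (2 + B) * ‖w x‖) ?_ ?_ ?_ ?_
    · exact Filter.Eventually.of_forall fun m => Continuous.aestronglyMeasurable (by fun_prop)
    · refine Filter.Eventually.of_forall fun m => Filter.Eventually.of_forall fun x hx => ?_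
      rw [Set.uIoc_of_le zero_le_one] at hx
      rw [norm_mul]
      exact mul_le_mul_of_nonneg_right (hbd m x ⟨hx.1.le, hx.2⟩) (norm_nonneg _)
    · exact Continuous.intervalIntegrable (by fun_prop) _ _
    · refine Filter.Eventually.of_forall fun x hx => ?_
      rw [Set.uIoc_of_le zero_le_one] at hx
      exact (hlim x ⟨hx.1.le, hx.2⟩).mul_const _
  simp only [hpoly] at L1
  rw [← hw3]
  exact tendsto_nhds_unique L1 L2

end Page

open MeasureTheory
namespace Page
open Finset

theorem prod_erase_fact (m t : ℕ) :
    ∏ i ∈ (range (m + 1 + t)).erase m, ((i : ℝ) - m) = (-1) ^ m * m.factorial * t.factorial := by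
  have h1 : (range (m + 1 + t)).erase m = range m ∪ Ico (m + 1) (m + 1 + t) := by
    ext i; simp; omega
  have hd : Disjoint (range m) (Ico (m + 1) (m + 1 + t)) := by
    rw [disjoint_left]; intro i; simp; omega
  rw [h1, prod_union hd, ← prod_range_reflect, prod_Ico_eq_prod_range]
  congr 1
  · have : ∀ i ∈ range m, ((m - 1 - i : ℕ) : ℝ) - m = (-1) * ((i + 1 : ℕ) : ℝ) := by
      intro i hi
      rw [mem_range] at hi
      rw [Nat.sub_sub, Nat.cast_sub (by omega)]
      push_cast; ring
    rw [prod_congr rfl this, prod_mul_distrib, prod_const, card_range, ← Nat.cast_prod, prod_range_add_one_eq_factorial]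
  · rw [Nat.add_sub_cancel_left]
    have : ∀ i ∈ range t, ((m + 1 + i : ℕ) : ℝ) - m = ((i + 1 : ℕ) : ℝ) := by
      intro i _
      push_cast; ring
    rw [prod_congr rfl this, ← Nat.cast_prod, prod_range_add_one_eq_factorial]

/-- derivative values -/
noncomputable def Dj (d s j : ℕ) : ℝ :=
  if j = 1 then (∑ p ∈ Ico (s - 1) (d * s), (1 : ℝ) / (1 + p)) - 1 / (d * s : ℕ) - ∑ i ∈ range (d - 1), (1 : ℝ) / (1 + i)
  else 1 / ((j : ℝ) - 1) - j / (d * s : ℕ)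

theorem prod_one (m N : ℕ) (hN : 1 ≤ N) (hm : m ≤ N) : (m.factorial : ℝ) * ∏ p ∈ Ico m N, ((1 : ℝ) + p) = N * (N - 1).factorial := by
  have h := prod_asc 1 m N le_rfl hm
  rw [show 1 + m - 1 = m by omega, show 1 + N - 1 = N by omega, ← Nat.mul_factorial_pred (n := N) (by omega)] at h
  exact_mod_cast h

theorem deriv_one (d s : ℕ) (hd : 1 ≤ d) (hds : d ≤ s) : HasDerivAt (Tj d s 1) (-Dj d s 1) 1 := by
  have hN : 1 ≤ d * s := Nat.mul_pos hd (by omega)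
  have hsN : s ≤ d * s := Nat.le_mul_of_pos_left _ hd
  have hN0 : ((d * s : ℕ) : ℝ) ≠ 0 := by exact_mod_cast (by omega : d * s ≠ 0)
  set N := d * s with hNd
  have n1 : ∀ i : ℕ, (1 : ℝ) + i ≠ 0 := fun i => by positivity
  have q1 : ∏ i ∈ range (d - 1), ((1 : ℝ) - (1 : ℕ) + 1 + i) = (d - 1).factorial := by
    rw [← prod_range_add_one_eq_factorial, Nat.cast_prod]
    refine prod_congr rfl fun i _ => ?_
    push_cast; ring
  have val : Tj d s 1 1 = 1 := by
    rw [Tj, Pj, aj, q1, ← hNd]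
    have := prod_one (s - 1) N hN (by omega)
    have p1 : (((s - 1).factorial : ℕ) : ℝ) ≠ 0 := by positivity
    have p2 : (((d - 1).factorial : ℕ) : ℝ) ≠ 0 := by positivity
    have p3 : ∏ p ∈ Ico (s - 1) N, ((1 : ℝ) + p) ≠ 0 := prod_ne_zero_iff.2 fun p _ => n1 p
    have p4 : (((N - 1).factorial : ℕ) : ℝ) ≠ 0 := by positivity
    simp
    field_simp
    linarith
  have ld : logDeriv (Tj d s 1) 1 = -Dj d s 1 := by
    have d1 : ∀ i : ℕ, DifferentiableAt ℝ (fun z : ℝ => z - (1 : ℕ) + 1 + i) 1 := fun i => by fun_prop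
    have d2 : ∀ i : ℕ, DifferentiableAt ℝ (fun z : ℝ => z + i) 1 := fun i => by fun_prop
    have a0 : aj d s 1 ≠ 0 := by
      intro h0
      rw [Tj, h0, zero_mul] at val
      exact zero_ne_one val
    have l1 : ∀ i : ℕ, logDeriv (fun z : ℝ => z - (1 : ℕ) + 1 + i) 1 = 1 / (1 + i) := by
      intro i
      rw [logDeriv_apply]
      simp
    have l2 : ∀ i : ℕ, logDeriv (fun z : ℝ => z + i) 1 = 1 / (1 + i) := by
      intro i
      rw [logDeriv_apply]
      simp
    have l3 : logDeriv (fun z : ℝ => (N : ℝ) + (1 : ℕ) * (z - (1 : ℕ))) 1 = 1 / N := by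
      rw [logDeriv_apply]
      simp
    have m1 : logDeriv (fun z : ℝ => ∏ i ∈ range (d - 1), (z - (1 : ℕ) + 1 + (i : ℝ))) 1 = ∑ i ∈ range (d - 1), (1 : ℝ) / (1 + i) := by
      rw [logDeriv_prod (f := fun (i : ℕ) (z : ℝ) => z - (1 : ℕ) + 1 + (i : ℝ))]
      · exact sum_congr rfl fun i _ => l1 i
      · intro i _
        have := n1 i
        simpa using this
      · intro i _
        exact d1 i
    have m2 : logDeriv (fun z : ℝ => ∏ p ∈ Ico (s - 1) N, (z + (p : ℝ))) 1 = ∑ p ∈ Ico (s - 1) N, (1 : ℝ) / (1 + p) := by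
      rw [logDeriv_prod (f := fun (i : ℕ) (z : ℝ) => z + (i : ℝ))]
      · exact sum_congr rfl fun i _ => l2 i
      · intro i _
        exact n1 i
      · intro i _
        exact d2 i
    unfold Tj
    rw [logDeriv_const_mul _ _ a0]
    unfold Pj
    rw [← hNd, logDeriv_div (f := fun z : ℝ => (∏ i ∈ range (d - 1), (z - (1 : ℕ) + 1 + (i : ℝ))) * ((N : ℝ) + (1 : ℕ) * (z - (1 : ℕ)))) (g := fun z : ℝ => ∏ p ∈ Ico (s - 1) N, (z + (p : ℝ))),
      logDeriv_mul (f := fun z : ℝ => ∏ i ∈ range (d - 1), (z - (1 : ℕ) + 1 + (i : ℝ))) (g := fun z : ℝ => (N : ℝ) + (1 : ℕ) * (z - (1 : ℕ))), m1, m2, l3, Dj, if_pos rfl]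
    · rw [← hNd]; ring
    · rw [q1]; positivity
    · simpa using hN0
    · fun_prop
    · fun_prop
    · simp only [q1]
      have : (((d - 1).factorial : ℕ) : ℝ) ≠ 0 := by positivity
      exact mul_ne_zero this (by simpa using hN0)
    · exact prod_ne_zero_iff.2 fun p _ => n1 p
    · fun_prop
    · fun_prop
  have hdiff : DifferentiableAt ℝ (Tj d s 1) 1 := by
    unfold Tj Pj
    refine DifferentiableAt.const_mul (DifferentiableAt.div (by fun_prop) (by fun_prop) ?_) _
    exact prod_ne_zero_iff.2 fun p _ => n1 p
  have := hdiff.hasDerivAt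
  rw [logDeriv_apply, val, div_one] at ld
  rwa [ld] at this

theorem deriv_two (d s j : ℕ) (hj : 2 ≤ j) (hjd : j ≤ d) (hds : d ≤ s) : HasDerivAt (Tj d s j) (-Dj d s j) 1 := by
  have hN : 1 ≤ d * s := Nat.mul_pos (by omega) (by omega)
  have hsN : s ≤ d * s := Nat.le_mul_of_pos_left _ (by omega)
  obtain ⟨m, rfl⟩ : ∃ m, j = m + 2 := ⟨j - 2, by omega⟩
  obtain ⟨t, rfl⟩ : ∃ t, d = m + 2 + t := ⟨d - (m + 2), by omega⟩
  set N := (m + 2 + t) * s with hNd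
  have hN0 : (N : ℝ) ≠ 0 := by exact_mod_cast (by omega : N ≠ 0)
  set h : ℝ → ℝ := fun z => aj (m + 2 + t) s (m + 2) * (((∏ i ∈ (range (m + 1 + t)).erase m, (z - (m + 2 : ℕ) + 1 + i)) *
     (N + (m + 2 : ℕ) * (z - (m + 2 : ℕ)))) / ∏ p ∈ Ico (s - (m + 2)) N, (z + p)) with hh
  have e1 : ∀ z, Tj (m + 2 + t) s (m + 2) z = (z - 1) * h z := by
    intro z
    rw [Tj, Pj, hh, show m + 2 + t - 1 = m + 1 + t by omega, ← hNd,
      ← mul_prod_erase (range (m + 1 + t)) _ (show m ∈ range (m + 1 + t) by simp; omega)]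
    push_cast
    ring
  have hc : ContinuousAt h 1 := by
    have p3 : ∏ p ∈ Ico (s - (m + 2)) N, ((1 : ℝ) + p) ≠ 0 := prod_ne_zero_iff.2 fun p _ => by positivity
    refine ContinuousAt.mul continuousAt_const (ContinuousAt.div ?_ ?_ p3)
    · exact Continuous.continuousAt (by fun_prop)
    · exact Continuous.continuousAt (by fun_prop)
  have hval : h 1 = -Dj (m + 2 + t) s (m + 2) := by
    have q : ∏ i ∈ (range (m + 1 + t)).erase m, ((1 : ℝ) - (m + 2 : ℕ) + 1 + i) = (-1) ^ m * m.factorial * t.factorial := by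
      rw [← prod_erase_fact]
      refine prod_congr rfl fun i _ => ?_
      push_cast; ring
    rw [hh, Dj, if_neg (by omega), ← hNd]
    dsimp only
    rw [q, aj, ← hNd, show m + 2 + t - 1 = m + 1 + t by omega, show m + 2 - 1 = m + 1 by omega]
    have e2 := prod_one (s - (m + 2)) N hN (by omega)
    have e3 : (((m + 1 + t).choose (m + 1) : ℕ) : ℝ) * ((m + 1) * m.factorial) * t.factorial = (m + 1 + t).factorial := by
      have := Nat.choose_mul_factorial_mul_factorial (show m + 1 ≤ m + 1 + t by omega)
      rw [Nat.add_sub_cancel_left] at this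
      rw [Nat.factorial_succ] at this
      exact_mod_cast this
    have p1 : (((s - (m + 2)).factorial : ℕ) : ℝ) ≠ 0 := by positivity
    have p2 : (((m + 1 + t).factorial : ℕ) : ℝ) ≠ 0 := by positivity
    have p3 : ∏ p ∈ Ico (s - (m + 2)) N, ((1 : ℝ) + p) ≠ 0 := prod_ne_zero_iff.2 fun p _ => by positivity
    have p4 : (((N - 1).factorial : ℕ) : ℝ) ≠ 0 := by positivity
    have p5 : (m : ℝ) + 1 ≠ 0 := by positivity
    have e4 : (((m + 1 + t).choose (m + 1) : ℕ) : ℝ) * m.factorial * t.factorial / (m + 1 + t).factorial = 1 / (m + 1) := by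
      rw [div_eq_div_iff p2 p5]; linarith
    have e5 : ((N - 1).factorial : ℝ) / ((s - (m + 2)).factorial * ∏ p ∈ Ico (s - (m + 2)) N, ((1 : ℝ) + p)) = 1 / N := by
      rw [e2]; field_simp
    have sg : (-1 : ℝ) ^ (m + 2 + 1) * (-1) ^ m = -1 := by
      rw [← pow_add, show m + 2 + 1 + m = 2 * (m + 1) + 1 by ring, pow_succ, pow_mul]; simp
    calc _ = ((-1 : ℝ) ^ (m + 2 + 1) * (-1) ^ m) * ((((m + 1 + t).choose (m + 1) : ℕ) : ℝ) * m.factorial * t.factorial / (m + 1 + t).factorial)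
          * (((N - 1).factorial : ℝ) / ((s - (m + 2)).factorial * ∏ p ∈ Ico (s - (m + 2)) N, ((1 : ℝ) + p))) *
          (N + (m + 2 : ℕ) * (1 - (m + 2 : ℕ))) := by
            field_simp
      _ = _ := by
        rw [sg, e4, e5]
        push_cast
        rw [show (m : ℝ) + 2 - 1 = m + 1 by ring]
        field_simp
        ring
  rw [funext e1, ← hval]
  rw [hasDerivAt_iff_tendsto_slope]
  have hs : ∀ z ∈ ({1}ᶜ : Set ℝ), h z = slope (fun z => (z - 1) * h z) 1 z := by
    intro z hz
    have : z - 1 ≠ 0 := sub_ne_zero.2 hz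
    rw [slope_def_field]
    field_simp
    ring
  refine Filter.Tendsto.congr' ?_ (hc.tendsto.mono_left nhdsWithin_le_nhds)
  filter_upwards [self_mem_nhdsWithin] with z hz using hs z hz

end Page

open MeasureTheory
namespace Page
open Finset

theorem Tj_good (d s j : ℕ) (hd : 2 ≤ d) (hds : d ≤ s) (hj : 1 ≤ j) (hjd : j ≤ d) :
    Good (fun n => Tj d s j n) (Dj d s j) := by
  have hder : HasDerivAt (Tj d s j) (-Dj d s j) 1 := by
    rcases Nat.lt_or_ge j 2 with h | h
    · obtain rfl : j = 1 := by omega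
      exact deriv_one d s (by omega) hds
    · exact deriv_two d s j h hjd hds
  set P : Polynomial ℝ := Polynomial.C (aj d s j) *
    ((∏ i ∈ range (d - 1), (Polynomial.X + Polynomial.C (1 + (i : ℝ) - j))) *
      (Polynomial.C (j : ℝ) * Polynomial.X + Polynomial.C (((d * s : ℕ) : ℝ) - j * j))) with hP
  have ev : ∀ z, P.eval z = aj d s j * Pj d s j z := by
    intro z
    rw [hP, Pj]
    simp only [Polynomial.eval_mul, Polynomial.eval_C, Polynomial.eval_prod, Polynomial.eval_add, Polynomial.eval_X]
    congr 2
    · exact prod_congr rfl fun i _ => by ring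
    · ring
  have e : ∀ z, Tj d s j z = P.eval z / ∏ p ∈ Ico (s - j) (d * s), (z + p) := by
    intro z
    rw [ev, Tj, mul_div_assoc]
  have hNs : 2 * s ≤ d * s := Nat.mul_le_mul_right s hd
  have := good_pf (Ico (s - j) (d * s)) P ?_ ?_ (Dj d s j) ?_
  · simpa only [e] using this
  · have h1 : (∏ i ∈ range (d - 1), (Polynomial.X + Polynomial.C (1 + (i : ℝ) - j))).natDegree ≤ d - 1 := by
      refine (Polynomial.natDegree_prod_le _ _).trans ?_
      simp only [Polynomial.natDegree_X_add_C, sum_const, card_range, smul_eq_mul, mul_one, le_refl]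
    have h2 : P.natDegree ≤ d := by
      refine (Polynomial.natDegree_C_mul_le _ _).trans (Polynomial.natDegree_mul_le.trans ?_)
      have := Polynomial.natDegree_linear_le (a := (j : ℝ)) (b := ((d * s : ℕ) : ℝ) - j * j)
      omega
    refine Polynomial.degree_le_natDegree.trans_lt ?_
    rw [Nat.card_Ico]
    exact_mod_cast (by omega : P.natDegree < d * s - (s - j))
  · intro h0
    rw [mem_Ico] at h0
    have h1 : s = d := by omega
    have h2 : j = d := by omega
    rw [ev, Pj, h1, h2]
    push_cast
    ring
  · rw [← funext e]
    exact hder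

theorem sum_Dj (d s : ℕ) (hd : 1 ≤ d) (hds : d ≤ s) :
    ∑ j ∈ Icc 1 d, Dj d s j = (∑ i ∈ Icc (s + 1) (d * s), (1 : ℝ) / i) - ((d : ℝ) - 1) / (2 * s) := by
  have hsN : s ≤ d * s := Nat.le_mul_of_pos_left _ hd
  have hs : (s : ℝ) ≠ 0 := by exact_mod_cast (by omega : s ≠ 0)
  obtain ⟨e, rfl⟩ : ∃ e, d = e + 1 := ⟨d - 1, by omega⟩
  have h1 : ∑ j ∈ Icc 1 (e + 1), Dj (e + 1) s j = Dj (e + 1) s 1 + ∑ i ∈ range e, (1 / ((1 : ℝ) + i) - (i + 2) / ((e + 1) * s : ℕ)) := by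
    rw [← Finset.Ico_add_one_right_eq_Icc, sum_Ico_eq_sum_range, show e + 1 + 1 - 1 = e + 1 by omega, sum_range_succ', add_comm]
    congr 1
    refine sum_congr rfl fun i _ => ?_
    rw [Dj, if_neg (by omega)]
    push_cast
    congr 2
    · ring
    · ring
  have h2 : ∑ i ∈ range e, ((i : ℝ) + 2) = e * (e + 3) / 2 := by
    clear h1 hd hds hsN
    induction e with
    | zero => simp
    | succ n ih => rw [sum_range_succ, ih]; push_cast; ring
  have h3 : ∑ p ∈ Ico (s - 1) ((e + 1) * s), (1 : ℝ) / (1 + p) = 1 / s + ∑ i ∈ Icc (s + 1) ((e + 1) * s), (1 : ℝ) / i := by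
    have a : ∑ p ∈ Ico (s - 1) ((e + 1) * s), (1 : ℝ) / (1 + p) = ∑ i ∈ Ico s ((e + 1) * s + 1), (1 : ℝ) / i := by
      have := sum_Ico_add' (fun i : ℕ => (1 : ℝ) / i) (s - 1) ((e + 1) * s) 1
      rw [show s - 1 + 1 = s by omega] at this
      rw [← this]
      refine sum_congr rfl fun i _ => ?_
      push_cast; rw [add_comm]
    rw [a, sum_eq_sum_Ico_succ_bot (by omega)]
    rfl
  rw [h1, sum_sub_distrib, ← sum_div, h2, Dj, if_pos rfl, h3, show e + 1 - 1 = e by omega]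
  have he : (e : ℝ) + 1 ≠ 0 := by positivity
  push_cast
  field_simp
  ring

theorem final {d s : ℕ} (hd : 1 ≤ d) (hds : d ≤ s)
    {μ : Measure (EuclideanSpace ℂ (Fin d × Fin s))} (h : IsUnif μ) :
    ∫ x, ∑ i, Real.negMulLog ((rho_herm x).eigenvalues i) ∂μ =
      (∑ i ∈ Icc (s + 1) (d * s), (1 : ℝ) / i) - ((d : ℝ) - 1) / (2 * s) := by
  rcases Nat.lt_or_ge d 2 with h2 | h2
  · obtain rfl : d = 1 := by omega
    have hp := h.prob
    have hae : ∀ᵐ x ∂μ, x ∈ Metric.sphere (0 : EuclideanSpace ℂ (Fin 1 × Fin s)) 1 :=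
      (prob_compl_eq_zero_iff Metric.isClosed_sphere.measurableSet).2 h.sph
    rw [integral_eq_zero_of_ae]
    · simp
    · filter_upwards [hae] with x hx
      have := (eig_mem x hx).1
      rw [Fin.sum_univ_one] at this
      rw [Fin.sum_univ_one, this]
      simp
  · rw [← sum_Dj d s hd hds]
    refine h.ext_nml (fun n => ∑ j ∈ Icc 1 d, Tj d s j n) _ (Good.sum _ _ _ fun j hj => ?_) ?_
    · rw [mem_Icc] at hj
      exact Tj_good d s j h2 hds hj.1 hj.2
    · intro n hn
      exact h.power_real hds ⟨0, by omega⟩ ⟨0, by omega⟩ n hn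

end Page

/-- **Page's formula for the average entanglement entropy.**  Let `1 ≤ d ≤ s`, let `x` be a
uniform random pure state on `ℂ^d ⊗ ℂ^s` (i.e. `x` has the unitarily invariant probability
distribution on the unit sphere of `ℂ^{ds}`), and let `ρ` be the partial trace over `ℂ^s` of
`xx*`, namely `ρ = A Aᴴ` where `A i a = x (i,a)`.  Then the expected von Neumann entropy of
`ρ` is `E[H(ρ)] = Σ_{i=s+1}^{ds} 1/i − (d−1)/(2s)`, where `H(ρ) = −Σ λ_i log λ_i` is computed
from the eigenvalues of the Hermitian matrix `ρ` (with `0·log 0 = 0`). -/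
theorem page_average_entropy
    (d s : ℕ) (hd : 1 ≤ d) (hds : d ≤ s)
    (μ : Measure (EuclideanSpace ℂ (Fin d × Fin s))) [IsProbabilityMeasure μ]
    (hsphere : μ (Metric.sphere 0 1) = 1)
    (hinv : ∀ U : EuclideanSpace ℂ (Fin d × Fin s) ≃ₗᵢ[ℂ]
        EuclideanSpace ℂ (Fin d × Fin s),
      Measure.map (fun x => U x) μ = μ) :
    ∫ x, ∑ i, Real.negMulLog
        ((Matrix.isHermitian_mul_conjTranspose_self
            (Matrix.of fun (i : Fin d) (a : Fin s) => x (i, a))).eigenvalues i) ∂μ =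
      (∑ i ∈ Finset.Icc (s + 1) (d * s), (1 : ℝ) / i) - ((d : ℝ) - 1) / (2 * s) := by
  exact Page.final hd hds ⟨inferInstance, hsphere, hinv⟩
end

section
/- Let n, k ≥ 1 with nk ≥ 2, and identify M_{nk}(ℂ) with matrices indexed by pairs in {1,…,n}×{1,…,k}. (i) Every Hermitian matrix ρ ∈ M_{nk}(ℂ) with Tr(ρ) = 1 and Frobenius norm distance ‖ρ − I/(nk)‖₂ ≤ (nk(nk−1))^{−1/2} is a separable density matrix (in particular it is positive semidefinite). (ii) This radius is optimal: for every r > (nk(nk−1))^{−1/2} there exists a Hermitian matrix σ with Tr(σ) = 1 and ‖σ − I/(nk)‖₂ ≤ r that is not positive semidefinite, so the ball of radius (nk(nk−1))^{−1/2} centered at the maximally mixed state I/(nk) is the largest Euclidean ball contained in the set of density matrices. -/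
open scoped Kronecker ComplexOrder

/-- A density matrix: a positive-semidefinite matrix of trace `1`. -/
def IsDensityMatrix {m : Type*} [Fintype m] (ρ : Matrix m m ℂ) : Prop :=
  ρ.PosSemidef ∧ ρ.trace = 1

/-- A density matrix on `ℂ^n ⊗ ℂ^k` is separable when it is a convex combination of Kronecker
products of density matrices. -/
def IsSeparableState {n k : ℕ}
    (ρ : Matrix (Fin n × Fin k) (Fin n × Fin k) ℂ) : Prop :=
  ∃ (m : ℕ) (p : Fin m → ℝ) (σ : Fin m → Matrix (Fin n) (Fin n) ℂ)
    (τ : Fin m → Matrix (Fin k) (Fin k) ℂ),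
    (∀ i, 0 ≤ p i) ∧ ∑ i, p i = 1 ∧
    (∀ i, IsDensityMatrix (σ i)) ∧ (∀ i, IsDensityMatrix (τ i)) ∧
    ρ = ∑ i, (p i : ℂ) • (σ i ⊗ₖ τ i)

/-- The Frobenius (Hilbert–Schmidt) norm `‖A‖₂ = √(Σ |A_{ij}|²)`. -/
noncomputable def frobNorm {m l : Type*} [Fintype m] [Fintype l]
    (A : Matrix m l ℂ) : ℝ :=
  Real.sqrt (∑ i, ∑ j, ‖A i j‖ ^ 2)


namespace GB

lemma isCompact_convexHull_fd {E : Type*} [AddCommGroup E] [Module ℝ E] [TopologicalSpace E]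
    [IsTopologicalAddGroup E] [ContinuousSMul ℝ E] [FiniteDimensional ℝ E]
    {s : Set E} (hs : IsCompact s) : IsCompact (convexHull ℝ s) := by
  classical
  rcases s.eq_empty_or_nonempty with rfl | ⟨x0, hx0⟩
  · simp
  set d := Module.finrank ℝ E + 1 with hd
  have hcomp : IsCompact ((stdSimplex ℝ (Fin d)) ×ˢ (Set.univ.pi fun _ : Fin d => s)) :=
    (isCompact_stdSimplex ℝ (Fin d)).prod (isCompact_univ_pi fun _ => hs)
  have hcont : Continuous (fun p : (Fin d → ℝ) × (Fin d → E) => ∑ i, p.1 i • p.2 i) := by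
    fun_prop
  have := hcomp.image hcont
  convert this using 1
  apply Set.Subset.antisymm
  · intro x hx
    obtain ⟨ι, _, z, w, hz, hind, hw, hw1, hsum⟩ := eq_pos_convex_span_of_mem_convexHull hx
    have hcard : Fintype.card ι ≤ Fintype.card (Fin d) := by
      rw [Fintype.card_fin]
      refine hind.card_le_finrank_succ.trans ?_
      rw [hd]
      gcongr
      exact Submodule.finrank_le _
    obtain ⟨e⟩ := Function.Embedding.nonempty_of_card_le hcard
    refine ⟨(Function.extend e w (fun _ => 0), Function.extend e z (fun _ => x0)), ⟨⟨?_, ?_⟩, ?_⟩, ?_⟩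
    · intro i
      by_cases h : ∃ a, e a = i
      · obtain ⟨a, rfl⟩ := h
        simpa [e.injective.extend_apply] using (hw a).le
      · simp [Function.extend_apply' _ _ _ h]
    · rw [← hw1]
      symm
      apply Finset.sum_of_injOn e e.injective.injOn (by simp)
      · intro i _ hi
        have h : ¬ ∃ a, e a = i := by simpa using hi
        simp [Function.extend_apply' _ _ _ h]
      · intro a _
        simp [e.injective.extend_apply]
    · intro i _
      by_cases h : ∃ a, e a = i
      · obtain ⟨a, rfl⟩ := h
        simpa [e.injective.extend_apply] using hz ⟨a, rfl⟩
      · simpa [Function.extend_apply' _ _ _ h] using hx0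
    · rw [← hsum]
      symm
      apply Finset.sum_of_injOn e e.injective.injOn (by simp)
      · intro i _ hi
        have h : ¬ ∃ a, e a = i := by simpa using hi
        simp [Function.extend_apply' _ _ _ h]
      · intro a _
        simp [e.injective.extend_apply]
  · rintro _ ⟨⟨w, z⟩, ⟨⟨hw0, hw1⟩, hz⟩, rfl⟩
    exact mem_convexHull_of_exists_fintype w z hw0 hw1 (fun i => hz i trivial) rfl

lemma posSemidef_diag_nonneg {m : Type*} [Fintype m] [DecidableEq m] {M : Matrix m m ℂ}
    (h : M.PosSemidef) (i : m) : 0 ≤ (M i i).re ∧ (M i i).im = 0 := by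
  have := h.diag_nonneg (i := i)
  rw [Complex.le_def] at this
  exact ⟨by simpa using this.1, by simpa using this.2.symm⟩

lemma posSemidef_minor {m : Type*} [Fintype m] [DecidableEq m] {M : Matrix m m ℂ}
    (h : M.PosSemidef) (i j : m) : ‖M i j‖ ^ 2 ≤ (M i i).re * (M j j).re := by
  have h2 := (h.submatrix ![i, j]).det_nonneg
  rw [Matrix.det_fin_two] at h2
  simp only [Matrix.submatrix_apply, Matrix.cons_val_zero, Matrix.cons_val_one] at h2
  have h3 : M j i = star (M i j) := (h.1.apply j i).symm
  rw [h3] at h2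
  have h4 := (Complex.le_def.1 h2).1
  have hi := posSemidef_diag_nonneg h i
  have hj := posSemidef_diag_nonneg h j
  simp only [Complex.zero_re, Complex.sub_re, Complex.mul_re, hi.2, hj.2, Complex.star_def,
    Complex.conj_re, Complex.conj_im] at h4
  rw [Complex.sq_norm, Complex.normSq_apply]
  nlinarith

lemma isCompact_density (n : ℕ) : IsCompact {ρ : Matrix (Fin n) (Fin n) ℂ | IsDensityMatrix ρ} := by
  have hc : IsCompact (Set.univ.pi fun _ : Fin n => Set.univ.pi fun _ : Fin n =>
      Metric.closedBall (0 : ℂ) 1) :=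
    isCompact_univ_pi fun _ => isCompact_univ_pi fun _ => isCompact_closedBall _ _
  refine IsCompact.of_isClosed_subset (X := Matrix (Fin n) (Fin n) ℂ) hc ?_ ?_
  · have : {ρ : Matrix (Fin n) (Fin n) ℂ | IsDensityMatrix ρ} =
      {ρ | ρ.conjTranspose = ρ} ∩ (⋂ x : Fin n → ℂ, {ρ | 0 ≤ star x ⬝ᵥ ρ.mulVec x}) ∩ {ρ | ρ.trace = 1} := by
      ext ρ
      simp [IsDensityMatrix, Matrix.posSemidef_iff_dotProduct_mulVec, Matrix.IsHermitian]
    rw [this]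
    refine IsClosed.inter (IsClosed.inter ?_ (isClosed_iInter fun x => ?_)) ?_
    · exact isClosed_eq (by fun_prop) continuous_id
    · exact isClosed_le continuous_const (by fun_prop)
    · exact isClosed_eq (by fun_prop) continuous_const
  · rintro ρ ⟨h, ht⟩ i _ j _
    have h1 : ∀ i, (ρ i i).re ≤ 1 := by
      intro i
      have : (ρ.trace).re = 1 := by rw [ht]; simp
      rw [← this, Matrix.trace, Complex.re_sum]
      exact Finset.single_le_sum (f := fun i => (ρ i i).re)
        (fun i _ => (posSemidef_diag_nonneg h i).1) (Finset.mem_univ i)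
    have := posSemidef_minor h i j
    have h0 := (posSemidef_diag_nonneg h i).1
    have h0' := (posSemidef_diag_nonneg h j).1
    have := h1 i
    have := h1 j
    rw [mem_closedBall_zero_iff]
    have : ‖ρ i j‖ ^ 2 ≤ 1 := by nlinarith
    nlinarith [norm_nonneg (ρ i j)]

lemma separable_iff {n k : ℕ} (ρ : Matrix (Fin n × Fin k) (Fin n × Fin k) ℂ)
    (h : ρ ∈ convexHull ℝ (Set.image2 (fun (σ : Matrix (Fin n) (Fin n) ℂ) (τ : Matrix (Fin k) (Fin k) ℂ) => σ ⊗ₖ τ)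
      {σ | IsDensityMatrix σ} {τ | IsDensityMatrix τ})) : IsSeparableState ρ := by
  obtain ⟨ι, _, w, z, hw, hw1, hz, hsum⟩ := mem_convexHull_iff_exists_fintype.1 h
  choose σ hσ τ hτ hz using hz
  let e := (Fintype.equivFin ι).symm
  refine ⟨Fintype.card ι, w ∘ e, σ ∘ e, τ ∘ e, fun i => hw _, ?_, fun i => hσ _, fun i => hτ _, ?_⟩
  · rw [← hw1]; exact e.sum_comp w
  · rw [← hsum, ← e.sum_comp]
    refine Finset.sum_congr rfl fun i _ => ?_
    simp only [Function.comp]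
    rw [← hz]
    ext a b
    simp

instance {m l : Type*} : LocallyConvexSpace ℝ (Matrix m l ℂ) :=
  inferInstanceAs (LocallyConvexSpace ℝ (m → l → ℂ))

/-- Separation: a non-separable matrix is detected by a witness. -/
lemma exists_functional {n k : ℕ} (ρ : Matrix (Fin n × Fin k) (Fin n × Fin k) ℂ)
    (ht : ρ.trace = 1) (h : ¬ IsSeparableState ρ) :
    ∃ φ : Matrix (Fin n × Fin k) (Fin n × Fin k) ℂ →ₗ[ℝ] ℝ,
      φ ρ < 0 ∧ ∀ σ τ, IsDensityMatrix σ → IsDensityMatrix τ → 0 ≤ φ (σ ⊗ₖ τ) := by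
  set K := convexHull ℝ (Set.image2 (fun (σ : Matrix (Fin n) (Fin n) ℂ) (τ : Matrix (Fin k) (Fin k) ℂ) => σ ⊗ₖ τ)
      {σ | IsDensityMatrix σ} {τ | IsDensityMatrix τ}) with hK
  have hcont : Continuous (fun p : Matrix (Fin n) (Fin n) ℂ × Matrix (Fin k) (Fin k) ℂ => p.1 ⊗ₖ p.2) := by
    refine continuous_matrix fun a b => ?_
    simp only [Matrix.kroneckerMap_apply]
    fun_prop
  have hc : IsCompact K := by
    apply isCompact_convexHull_fd
    rw [← Set.image_prod]
    exact ((isCompact_density n).prod (isCompact_density k)).image hcont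
  obtain ⟨f, u, h1, h2⟩ := geometric_hahn_banach_point_closed (convex_convexHull ℝ _) hc.isClosed
    (fun hm => h (separable_iff ρ hm))
  refine ⟨f.toLinearMap - u • (Complex.reLm ∘ₗ (Matrix.traceLinearMap (Fin n × Fin k) ℝ ℂ)), ?_, ?_⟩
  · simpa [ht] using h1
  · intro σ τ hσ hτ
    have := h2 _ (subset_convexHull _ _ ⟨σ, hσ, τ, hτ, rfl⟩)
    simp only [LinearMap.sub_apply, LinearMap.smul_apply, LinearMap.comp_apply, Matrix.traceLinearMap_apply,
      Matrix.trace_kronecker, hσ.2, hτ.2]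
    simpa using this.le

lemma functional_eq_trace {m : Type*} [Fintype m] [DecidableEq m] (φ : Matrix m m ℂ →ₗ[ℝ] ℝ) :
    ∃ W : Matrix m m ℂ, W.IsHermitian ∧ ∀ M : Matrix m m ℂ, M.IsHermitian →
      φ M = (W * M).trace.re := by
  let W0 : Matrix m m ℂ := Matrix.of fun p q =>
    (φ (Matrix.single q p 1) : ℂ) - Complex.I * (φ (Matrix.single q p Complex.I) : ℂ)
  have h0 : ∀ M : Matrix m m ℂ, φ M = (W0 * M).trace.re := by
    intro M
    have hM : ∀ i j, φ (Matrix.single i j (M i j)) =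
        (M i j).re * φ (Matrix.single i j 1) + (M i j).im * φ (Matrix.single i j Complex.I) := by
      intro i j
      have : Matrix.single i j (M i j) = (M i j).re • Matrix.single i j (1 : ℂ)
          + (M i j).im • Matrix.single i j Complex.I := by
        rw [Matrix.smul_single, Matrix.smul_single, ← Matrix.single_add]
        congr 1
        simp [Complex.re_add_im]
      rw [this, map_add, map_smul, map_smul]; simp
    conv_lhs => rw [Matrix.matrix_eq_sum_single M]
    rw [map_sum]
    simp_rw [map_sum, hM]
    rw [Finset.sum_comm, Matrix.trace, Complex.re_sum]
    refine Finset.sum_congr rfl fun j _ => ?_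
    rw [Matrix.diag_apply, Matrix.mul_apply, Complex.re_sum]
    refine Finset.sum_congr rfl fun i _ => ?_
    simp [W0, Matrix.of_apply]
    ring
  refine ⟨(2⁻¹ : ℝ) • (W0 + W0.conjTranspose), ?_, ?_⟩
  · unfold Matrix.IsHermitian
    rw [Matrix.conjTranspose_smul, Matrix.conjTranspose_add, Matrix.conjTranspose_conjTranspose, add_comm]
    simp
  · intro M hM
    have h1 : (W0.conjTranspose * M).trace = star (W0 * M).trace := by
      rw [← Matrix.trace_conjTranspose, Matrix.conjTranspose_mul, hM.eq, Matrix.trace_mul_comm]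
    rw [smul_mul_assoc, Matrix.trace_smul, add_mul, Matrix.trace_add, h1, h0]
    simp
    ring

/-- The `(i,j)` block. -/
def blk {n k : ℕ} (W : Matrix (Fin n × Fin k) (Fin n × Fin k) ℂ) (i j : Fin n) :
    Matrix (Fin k) (Fin k) ℂ := Matrix.of fun a b => W (i, a) (j, b)

lemma blk_psd {n k : ℕ} (W : Matrix (Fin n × Fin k) (Fin n × Fin k) ℂ) (hW : W.IsHermitian)
    (hpos : ∀ (σ : Matrix (Fin n) (Fin n) ℂ) (τ : Matrix (Fin k) (Fin k) ℂ),
      σ.PosSemidef → τ.PosSemidef → 0 ≤ (W * (σ ⊗ₖ τ)).trace.re)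
    (P : Matrix (Fin k) (Fin k) ℂ) (hP : P.PosSemidef) :
    (Matrix.of fun i j => (blk W i j * P).trace).PosSemidef := by
  have hH : (Matrix.of fun i j => (blk W i j * P).trace).IsHermitian := by
    ext i j
    rw [Matrix.conjTranspose_apply, Matrix.of_apply, Matrix.of_apply, ← Matrix.trace_conjTranspose,
      Matrix.conjTranspose_mul, hP.1.eq, Matrix.trace_mul_comm]
    congr 2
    ext a b
    simp only [Matrix.conjTranspose_apply, blk, Matrix.of_apply]
    exact hW.apply _ _
  refine Matrix.PosSemidef.of_dotProduct_mulVec_nonneg hH fun x => ?_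
  have key : star x ⬝ᵥ (Matrix.of fun i j => (blk W i j * P).trace).mulVec x =
      (W * (Matrix.vecMulVec x (star x) ⊗ₖ P)).trace := by
    simp only [dotProduct, Matrix.mulVec, Matrix.trace, Matrix.diag_apply, Matrix.mul_apply,
      Matrix.of_apply, Fintype.sum_prod_type, Matrix.kroneckerMap_apply, Matrix.vecMulVec_apply, blk]
    simp only [Finset.mul_sum, Finset.sum_mul]
    refine Finset.sum_congr rfl fun i _ => ?_
    rw [Finset.sum_comm]
    refine Finset.sum_congr rfl fun a _ => ?_
    refine Finset.sum_congr rfl fun j _ => ?_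
    refine Finset.sum_congr rfl fun b _ => ?_
    ring
  rw [Complex.le_def]
  constructor
  · rw [key]
    exact hpos _ _ (Matrix.posSemidef_vecMulVec_self_star x) hP
  · have := hH.im_star_dotProduct_mulVec_self x
    simpa using this.symm

lemma pos_of_density {n k : ℕ} (W : Matrix (Fin n × Fin k) (Fin n × Fin k) ℂ)
    (h : ∀ (σ : Matrix (Fin n) (Fin n) ℂ) (τ : Matrix (Fin k) (Fin k) ℂ),
      IsDensityMatrix σ → IsDensityMatrix τ → 0 ≤ (W * (σ ⊗ₖ τ)).trace.re)
    (σ : Matrix (Fin n) (Fin n) ℂ) (τ : Matrix (Fin k) (Fin k) ℂ)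
    (hσ : σ.PosSemidef) (hτ : τ.PosSemidef) : 0 ≤ (W * (σ ⊗ₖ τ)).trace.re := by
  have aux : ∀ {l : ℕ} (σ : Matrix (Fin l) (Fin l) ℂ), σ.PosSemidef → σ ≠ 0 →
      ∃ (c : ℝ) (σ' : Matrix (Fin l) (Fin l) ℂ), 0 ≤ c ∧ IsDensityMatrix σ' ∧ σ = c • σ' := by
    intro l σ hσ h0
    have h1 := hσ.trace_nonneg
    have h2 : σ.trace ≠ 0 := fun h => h0 (hσ.trace_eq_zero_iff.1 h)
    obtain ⟨hre, him⟩ := Complex.le_def.1 h1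
    have him' : σ.trace = (σ.trace.re : ℂ) := by
      apply Complex.ext <;> simp; simpa using him.symm
    have h3 : σ.trace.re ≠ 0 := by
      intro h; rw [h] at him'; exact h2 (by simpa using him')
    have hre' : 0 ≤ σ.trace.re := by simpa using hre
    refine ⟨σ.trace.re, (σ.trace.re)⁻¹ • σ, hre', ⟨hσ.smul (inv_nonneg.2 hre'), ?_⟩, ?_⟩
    · rw [Matrix.trace_smul, Complex.real_smul]
      nth_rewrite 2 [him']
      rw [← Complex.ofReal_mul, inv_mul_cancel₀ h3]; simp
    · rw [smul_smul, mul_inv_cancel₀ h3, one_smul]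
  by_cases hs : σ = 0
  · simp [hs]
  by_cases ht : τ = 0
  · simp [ht]
  obtain ⟨c, σ', hc, hσ', rfl⟩ := aux σ hσ hs
  obtain ⟨d, τ', hd, hτ', rfl⟩ := aux τ hτ ht
  have := h σ' τ' hσ' hτ'
  rw [Matrix.smul_kronecker, Matrix.kronecker_smul, mul_smul_comm, mul_smul_comm, Matrix.trace_smul,
    Matrix.trace_smul, Complex.smul_re, Complex.smul_re]
  exact smul_nonneg hc (smul_nonneg hd this)

section unitary
open scoped Matrix.Norms.L2Operator

lemma unitary_decomp {k : ℕ} (X : Matrix (Fin k) (Fin k) ℂ) (hX : X ∈ unitary (Matrix (Fin k) (Fin k) ℂ)) :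
    ∃ (s : Finset ℂ) (P : ℂ → Matrix (Fin k) (Fin k) ℂ), (∀ z ∈ s, ‖z‖ ≤ 1) ∧
      (∀ z, (P z).PosSemidef) ∧ ∑ z ∈ s, P z = 1 ∧ ∑ z ∈ s, z • P z = X := by
  classical
  have hfin := Matrix.finite_spectrum X
  have hn : IsStarNormal X := ⟨by rw [Commute, SemiconjBy, (Unitary.mem_iff.1 hX).1, (Unitary.mem_iff.1 hX).2]⟩
  have hcont : ∀ f : ℂ → ℂ, ContinuousOn f (spectrum ℂ X) := fun f => hfin.continuousOn f
  let f : ℂ → ℂ → ℂ := fun z w => if w = z then 1 else 0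
  refine ⟨hfin.toFinset, fun z => cfc (f z) X, ?_, ?_, ?_, ?_⟩
  · intro z hz
    have := spectrum.subset_circle_of_unitary hX (hfin.mem_toFinset.1 hz)
    simp at this
    exact this.le
  · intro z
    have : cfc (f z) X = (cfc (f z) X).conjTranspose * cfc (f z) X := by
      rw [← Matrix.star_eq_conjTranspose, ← cfc_star, ← cfc_mul _ _ _ (hcont _) (hcont _)]
      congr 1
      ext w
      by_cases h : w = z <;> simp [f, h]
    change (cfc (f z) X).PosSemidef
    rw [this]
    exact Matrix.posSemidef_conjTranspose_mul_self _
  · rw [← cfc_sum _ _ _ (fun i _ => hcont _)]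
    rw [← cfc_one ℂ X]
    apply cfc_congr
    intro w hw
    simp [f, hw]
  · simp_rw [← cfc_smul _ _ X (hcont _)]
    rw [← cfc_sum _ _ _ (fun i _ => hcont _)]
    conv_rhs => rw [← cfc_id ℂ X]
    apply cfc_congr
    intro w hw
    simp [f, hw]

end unitary

lemma trace_unitary_le {k : ℕ} (A B C : Matrix (Fin k) (Fin k) ℂ)
    (hA : ∀ P : Matrix (Fin k) (Fin k) ℂ, P.PosSemidef → 0 ≤ (A * P).trace.re)
    (hB : ∀ P : Matrix (Fin k) (Fin k) ℂ, P.PosSemidef → 0 ≤ (B * P).trace.re)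
    (hC : ∀ P : Matrix (Fin k) (Fin k) ℂ, P.PosSemidef →
      ‖(C * P).trace‖ ^ 2 ≤ (A * P).trace.re * (B * P).trace.re)
    (X : Matrix (Fin k) (Fin k) ℂ) (hX : X ∈ unitary (Matrix (Fin k) (Fin k) ℂ)) :
    ‖(C * X).trace‖ ^ 2 ≤ A.trace.re * B.trace.re := by
  obtain ⟨s, P, hs, hP, h1, h2⟩ := unitary_decomp X hX
  have e : ∀ M : Matrix (Fin k) (Fin k) ℂ, M.trace.re = ∑ z ∈ s, (M * P z).trace.re := by
    intro M
    conv_lhs => rw [← mul_one M, ← h1]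
    rw [Finset.mul_sum, Matrix.trace_sum, Complex.re_sum]
  have h3 : ‖(C * X).trace‖ ≤ ∑ z ∈ s, ‖(C * P z).trace‖ := by
    rw [← h2, Finset.mul_sum, Matrix.trace_sum]
    refine (norm_sum_le _ _).trans (Finset.sum_le_sum fun z hz => ?_)
    rw [mul_smul_comm, Matrix.trace_smul, norm_smul]
    exact mul_le_of_le_one_left (norm_nonneg _) (hs z hz)
  rw [e A, e B]
  refine le_trans (pow_le_pow_left₀ (norm_nonneg _) h3 2) ?_
  exact Finset.sum_sq_le_sum_mul_sum_of_sq_le_mul s (fun z _ => hA _ (hP z)) (fun z _ => hB _ (hP z))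
    (fun z _ => hC _ (hP z))

lemma sum_sq_le {k : ℕ} (s : Fin k → ℝ) (hs : ∀ a, 0 ≤ s a) : ∑ a, s a ^ 2 ≤ (∑ a, s a) ^ 2 := by
  rw [sq (∑ a, s a), Finset.sum_mul]
  refine Finset.sum_le_sum fun a _ => ?_
  rw [sq]
  exact mul_le_mul_of_nonneg_left
    (Finset.single_le_sum (fun i _ => hs i) (Finset.mem_univ a)) (hs a)

lemma trace_conjTranspose_mul {m l : Type*} [Fintype m] [Fintype l] (C : Matrix m l ℂ) :
    (C.conjTranspose * C).trace = ((∑ a, ∑ b, ‖C a b‖ ^ 2 : ℝ) : ℂ) := by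
  rw [Finset.sum_comm]
  simp only [Matrix.trace, Matrix.diag_apply, Matrix.mul_apply, Matrix.conjTranspose_apply]
  push_cast
  refine Finset.sum_congr rfl fun a _ => Finset.sum_congr rfl fun b _ => ?_
  rw [Complex.star_def, Complex.conj_mul']

lemma polar {k : ℕ} (C : Matrix (Fin k) (Fin k) ℂ) :
    ∃ X ∈ unitary (Matrix (Fin k) (Fin k) ℂ),
      ∑ a, ∑ b, ‖C a b‖ ^ 2 ≤ ‖(C * X).trace‖ ^ 2 := by
  classical
  have hH : (C.conjTranspose * C).IsHermitian := Matrix.isHermitian_conjTranspose_mul_self C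
  have hpsd : (C.conjTranspose * C).PosSemidef := Matrix.posSemidef_conjTranspose_mul_self C
  set lam := hH.eigenvalues with hlam
  have hlam0 : ∀ a, 0 ≤ lam a := hpsd.eigenvalues_nonneg
  set V : Matrix (Fin k) (Fin k) ℂ := hH.eigenvectorUnitary.1 with hV
  have hVu : V ∈ unitary (Matrix (Fin k) (Fin k) ℂ) := hH.eigenvectorUnitary.2
  have hV1 : V.conjTranspose * V = 1 := (Unitary.mem_iff.1 hVu).1
  have hV2 : V * V.conjTranspose = 1 := (Unitary.mem_iff.1 hVu).2
  have hspec : C.conjTranspose * C = V * Matrix.diagonal (fun a => (lam a : ℂ)) * V.conjTranspose := by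
    have := hH.spectral_theorem
    rw [Unitary.conjStarAlgAut_apply] at this
    exact this
  set D := C * V with hD
  have hDD : D.conjTranspose * D = Matrix.diagonal (fun a => (lam a : ℂ)) := by
    rw [hD, Matrix.conjTranspose_mul, Matrix.mul_assoc, ← Matrix.mul_assoc _ C, hspec]
    simp only [Matrix.mul_assoc, hV1, Matrix.mul_one]
    rw [← Matrix.mul_assoc, hV1, Matrix.one_mul]
  have hDD' : ∀ a b, ∑ c, star (D c a) * D c b = if a = b then (lam a : ℂ) else 0 := by
    intro a b
    have := congrFun (congrFun hDD a) b
    rw [Matrix.mul_apply, Matrix.diagonal_apply] at this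
    simpa using this
  let s : Fin k → ℝ := fun a => Real.sqrt (lam a)
  have hs0 : ∀ a, 0 ≤ s a := fun a => Real.sqrt_nonneg _
  have hss : ∀ a, s a ^ 2 = lam a := fun a => Real.sq_sqrt (hlam0 a)
  let u : Fin k → EuclideanSpace ℂ (Fin k) := fun a => WithLp.toLp 2 (fun c => ((s a)⁻¹ : ℂ) * D c a)
  have hu : Orthonormal ℂ (({a | lam a ≠ 0} : Set (Fin k)).domRestrict u) := by
    rw [orthonormal_iff_ite]
    rintro ⟨a, ha⟩ ⟨b, hb⟩
    have h1 : inner ℂ (u a) (u b) = ((s a)⁻¹ : ℂ) * ((s b)⁻¹ : ℂ) * ∑ c, star (D c a) * D c b := by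
      rw [PiLp.inner_apply, Finset.mul_sum]
      refine Finset.sum_congr rfl fun c _ => ?_
      simp [u]
      ring
    change inner ℂ (u a) (u b) = _
    rw [h1, hDD']
    by_cases h : a = b
    · subst h
      have hsa : s a ≠ 0 := by
        intro h; apply ha; rw [← hss, h]; simp
      have hsa' : (s a : ℂ) ≠ 0 := by exact_mod_cast hsa
      simp only [if_true]
      rw [← hss]
      push_cast
      field_simp
    · simp [h]
  obtain ⟨b, hb⟩ := hu.exists_orthonormalBasis_extension_of_card_eq (by simp)
  let B : Matrix (Fin k) (Fin k) ℂ := Matrix.of fun c a => b a c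
  have hB1 : B.conjTranspose * B = 1 := by
    ext a a'
    have := orthonormal_iff_ite.1 b.orthonormal a a'
    rw [PiLp.inner_apply] at this
    rw [Matrix.mul_apply, Matrix.one_apply, ← this]
    refine Finset.sum_congr rfl fun c _ => ?_
    simp [B, mul_comm]
  have hB2 : B * B.conjTranspose = 1 := mul_eq_one_comm.1 hB1
  have hDB : D = B * Matrix.diagonal (fun a => (s a : ℂ)) := by
    ext c a
    rw [Matrix.mul_diagonal]
    by_cases h : lam a = 0
    · have h1 := hDD' a a
      simp only [if_true, h] at h1
      have h2 : ∑ c, ‖D c a‖ ^ 2 = 0 := by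
        have : ((∑ c, ‖D c a‖ ^ 2 : ℝ) : ℂ) = 0 := by
          rw [← Complex.ofReal_zero, ← h1]
          push_cast
          exact Finset.sum_congr rfl fun c _ => by rw [Complex.star_def, Complex.conj_mul']
        exact_mod_cast this
      have h3 := (Finset.sum_eq_zero_iff_of_nonneg (fun c _ => by positivity)).1 h2 c (Finset.mem_univ c)
      have h4 : D c a = 0 := by simpa using h3
      simp [h4, s, h]
    · have hsa : s a ≠ 0 := by
        intro h'; apply h; rw [← hss, h']; simp
      have hsa' : (s a : ℂ) ≠ 0 := by exact_mod_cast hsa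
      have : b a c = ((s a)⁻¹ : ℂ) * D c a := by rw [hb a h]
      simp only [B, Matrix.of_apply]
      rw [this]
      field_simp
  refine ⟨V * B.conjTranspose, ?_, ?_⟩
  · have hBu : B.conjTranspose ∈ unitary (Matrix (Fin k) (Fin k) ℂ) := by
      rw [Unitary.mem_iff, Matrix.star_eq_conjTranspose, Matrix.conjTranspose_conjTranspose]
      exact ⟨hB2, hB1⟩
    exact mul_mem hVu hBu
  · have h1 : (C * (V * B.conjTranspose)).trace = ((∑ a, s a : ℝ) : ℂ) := by
      rw [← Matrix.mul_assoc, ← hD, hDB, Matrix.trace_mul_comm, ← Matrix.mul_assoc, hB1, Matrix.one_mul,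
        Matrix.trace_diagonal]
      push_cast; rfl
    have h2 : ∑ a, ∑ b, ‖C a b‖ ^ 2 = ∑ a, s a ^ 2 := by
      have : ((∑ a, ∑ b, ‖C a b‖ ^ 2 : ℝ) : ℂ) = ((∑ a, s a ^ 2 : ℝ) : ℂ) := by
        rw [← trace_conjTranspose_mul, hspec, Matrix.trace_mul_comm, ← Matrix.mul_assoc, hV1,
          Matrix.one_mul, Matrix.trace_diagonal]
        simp_rw [hss]
        push_cast; rfl
      exact_mod_cast this
    rw [h1, h2, Complex.norm_real, Real.norm_eq_abs, sq_abs]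
    exact sum_sq_le s hs0

lemma frob_le_trace {n k : ℕ} (W : Matrix (Fin n × Fin k) (Fin n × Fin k) ℂ) (hW : W.IsHermitian)
    (hpos : ∀ (σ : Matrix (Fin n) (Fin n) ℂ) (τ : Matrix (Fin k) (Fin k) ℂ),
      σ.PosSemidef → τ.PosSemidef → 0 ≤ (W * (σ ⊗ₖ τ)).trace.re) :
    frobNorm W ≤ W.trace.re := by
  have hb : ∀ i j, ∑ a, ∑ b, ‖blk W i j a b‖ ^ 2 ≤ (blk W i i).trace.re * (blk W j j).trace.re := by
    intro i j
    obtain ⟨X, hX, h⟩ := polar (blk W i j)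
    refine h.trans (trace_unitary_le _ _ _ ?_ ?_ ?_ X hX)
    · intro P hP
      exact (posSemidef_diag_nonneg (blk_psd W hW hpos P hP) i).1
    · intro P hP
      exact (posSemidef_diag_nonneg (blk_psd W hW hpos P hP) j).1
    · intro P hP
      exact posSemidef_minor (blk_psd W hW hpos P hP) i j
  have htr : W.trace.re = ∑ i, (blk W i i).trace.re := by
    simp [Matrix.trace, Fintype.sum_prod_type, blk]
  have h0 : 0 ≤ W.trace.re := by
    have := hpos 1 1 Matrix.PosSemidef.one Matrix.PosSemidef.one
    rwa [Matrix.one_kronecker_one, mul_one] at this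
  unfold frobNorm
  rw [Real.sqrt_le_left h0, htr, sq, Finset.sum_mul_sum]
  simp only [Fintype.sum_prod_type]
  refine Finset.sum_le_sum fun i _ => ?_
  rw [Finset.sum_comm]
  exact Finset.sum_le_sum fun j _ => hb i j

lemma abs_trace_mul_le {m : Type*} [Fintype m] (W M : Matrix m m ℂ) :
    |(W * M).trace.re| ≤ frobNorm W * frobNorm M := by
  have h1 : ‖(W * M).trace‖ ≤ ∑ p : m × m, ‖W p.1 p.2‖ * ‖M p.2 p.1‖ := by
    rw [Fintype.sum_prod_type]
    simp only [Matrix.trace, Matrix.diag_apply, Matrix.mul_apply]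
    refine (norm_sum_le _ _).trans (Finset.sum_le_sum fun i _ => ?_)
    refine (norm_sum_le _ _).trans (Finset.sum_le_sum fun j _ => ?_)
    rw [norm_mul]
  refine (Complex.abs_re_le_norm _).trans (h1.trans ?_)
  refine (Real.sum_mul_le_sqrt_mul_sqrt _ _ _).trans ?_
  unfold frobNorm
  rw [Fintype.sum_prod_type, Fintype.sum_prod_type, Finset.sum_comm (f := fun x y => ‖M y x‖ ^ 2)]

lemma frob_sq {m l : Type*} [Fintype m] [Fintype l] (A : Matrix m l ℂ) :
    ((frobNorm A ^ 2 : ℝ) : ℂ) = (A.conjTranspose * A).trace := by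
  rw [trace_conjTranspose_mul, frobNorm, Real.sq_sqrt (by positivity)]

lemma part_one {n k : ℕ} (hnk : 2 ≤ n * k) (ρ : Matrix (Fin n × Fin k) (Fin n × Fin k) ℂ)
    (hρ : ρ.IsHermitian) (ht : ρ.trace = 1)
    (hd : frobNorm (ρ - (((n * k : ℕ) : ℂ))⁻¹ • 1) ≤
        1 / Real.sqrt (((n * k : ℕ) : ℝ) * (((n * k : ℕ) : ℝ) - 1))) : IsSeparableState ρ := by
  by_contra hns
  obtain ⟨φ, h1, h2⟩ := exists_functional ρ ht hns
  obtain ⟨W, hW, hφ⟩ := functional_eq_trace φ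
  have hpos := pos_of_density W (fun σ τ hσ hτ => by
    rw [← hφ _ (hσ.1.kronecker hτ.1).1]
    exact h2 σ τ hσ hτ)
  have hfr := frob_le_trace W hW hpos
  set N : ℝ := ((n * k : ℕ) : ℝ) with hN
  have hN2 : 2 ≤ N := by rw [hN]; exact_mod_cast hnk
  have hNC : ((n * k : ℕ) : ℂ) = (N : ℂ) := by simp [hN]
  rw [hNC] at hd
  have hN0 : (N : ℂ) ≠ 0 := by exact_mod_cast (by linarith : N ≠ 0)
  have hone : (1 : Matrix (Fin n × Fin k) (Fin n × Fin k) ℂ).trace = (N : ℂ) := by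
    rw [Matrix.trace_one, ← hNC]; simp
  have hd2 : frobNorm (ρ - ((N : ℂ))⁻¹ • 1) ^ 2 ≤ 1 / (N * (N - 1)) := by
    have : frobNorm (ρ - ((N : ℂ))⁻¹ • 1) ^ 2 ≤ (1 / Real.sqrt (N * (N - 1))) ^ 2 :=
      pow_le_pow_left₀ (Real.sqrt_nonneg _) hd 2
    rwa [div_pow, one_pow, Real.sq_sqrt (by nlinarith)] at this
  have e1 : frobNorm (ρ - ((N : ℂ))⁻¹ • 1) ^ 2 = (ρ * ρ).trace.re - 1 / N := by
    have := frob_sq (ρ - ((N : ℂ))⁻¹ • 1)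
    have h3 : ((ρ - ((N : ℂ))⁻¹ • 1).conjTranspose * (ρ - ((N : ℂ))⁻¹ • 1)).trace
        = (ρ * ρ).trace - (1 / N : ℝ) := by
      simp [Matrix.conjTranspose_sub, hρ.eq, sub_mul, mul_sub, ht, hone]
      field_simp
      ring
    rw [h3] at this
    have h4 := congrArg Complex.re this
    rw [Complex.ofReal_re, Complex.sub_re, Complex.ofReal_re] at h4
    exact h4
  have e2 : frobNorm (((N - 1 : ℝ) : ℂ) • ρ - 1) ^ 2 = (N - 1) ^ 2 * (ρ * ρ).trace.re - 2 * (N - 1) + N := by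
    have := frob_sq (((N - 1 : ℝ) : ℂ) • ρ - 1)
    have h3 : ((((N - 1 : ℝ) : ℂ) • ρ - 1).conjTranspose * (((N - 1 : ℝ) : ℂ) • ρ - 1)).trace
        = (((N - 1) ^ 2 : ℝ) : ℂ) * (ρ * ρ).trace + ((N - 2 * (N - 1) : ℝ) : ℂ) := by
      simp [Matrix.conjTranspose_sub, hρ.eq, sub_mul, mul_sub, ht, hone]
      ring
    rw [h3] at this
    have h4 := congrArg Complex.re this
    rw [Complex.ofReal_re, Complex.add_re, Complex.re_ofReal_mul, Complex.ofReal_re] at h4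
    rw [h4]; ring
  have e3 : frobNorm (((N - 1 : ℝ) : ℂ) • ρ - 1) ^ 2 ≤ 1 := by
    have h5 : (ρ * ρ).trace.re ≤ 1 / (N - 1) := by
      have : 1 / (N * (N - 1)) + 1 / N = 1 / (N - 1) := by
        have : N - 1 ≠ 0 := by linarith
        have : N ≠ 0 := by linarith
        field_simp
        ring
      linarith
    have h6 : (N - 1) ^ 2 * (ρ * ρ).trace.re ≤ (N - 1) ^ 2 * (1 / (N - 1)) := by gcongr
    have h7 : (N - 1) ^ 2 * (1 / (N - 1)) = N - 1 := by
      have : N - 1 ≠ 0 := by linarith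
      field_simp
    rw [e2]; linarith
  have e4 : frobNorm (((N - 1 : ℝ) : ℂ) • ρ - 1) ≤ 1 := by
    nlinarith [Real.sqrt_nonneg (∑ i, ∑ j, ‖(((N - 1 : ℝ) : ℂ) • ρ - 1) i j‖ ^ 2)]
  have h8 := abs_trace_mul_le W (((N - 1 : ℝ) : ℂ) • ρ - 1)
  have h9 : (W * (((N - 1 : ℝ) : ℂ) • ρ - 1)).trace.re = (N - 1) * (W * ρ).trace.re - W.trace.re := by
    rw [mul_sub, Matrix.trace_sub, mul_smul_comm, Matrix.trace_smul, mul_one, Complex.sub_re, smul_eq_mul,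
      Complex.re_ofReal_mul]
  have h10 : frobNorm W * frobNorm (((N - 1 : ℝ) : ℂ) • ρ - 1) ≤ frobNorm W * 1 :=
    mul_le_mul_of_nonneg_left e4 (Real.sqrt_nonneg _)
  rw [hφ ρ hρ] at h1
  have h11 := (abs_le.1 h8).1
  rw [h9] at h11
  nlinarith

lemma part_two {n k : ℕ} (hnk : 2 ≤ n * k) (r : ℝ)
    (hr : 1 / Real.sqrt (((n * k : ℕ) : ℝ) * (((n * k : ℕ) : ℝ) - 1)) < r) :
    ∃ σ : Matrix (Fin n × Fin k) (Fin n × Fin k) ℂ,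
        σ.IsHermitian ∧ σ.trace = 1 ∧
        frobNorm (σ - (((n * k : ℕ) : ℂ))⁻¹ • 1) ≤ r ∧ ¬ σ.PosSemidef := by
  set N : ℝ := ((n * k : ℕ) : ℝ) with hN
  have hN2 : 2 ≤ N := by rw [hN]; exact_mod_cast hnk
  have hNC : ((n * k : ℕ) : ℂ) = (N : ℂ) := by simp [hN]
  rw [hNC]
  have hN0 : N ≠ 0 := by linarith
  have hN1 : N - 1 ≠ 0 := by linarith
  have hcard : (Fintype.card (Fin n × Fin k) : ℝ) = N := by simp [hN]
  have hn : 0 < n := Nat.pos_of_ne_zero (by rintro rfl; omega)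
  have hk : 0 < k := Nat.pos_of_ne_zero (by rintro rfl; omega)
  let p0 : Fin n × Fin k := (⟨0, hn⟩, ⟨0, hk⟩)
  have hr0 : 0 < r := lt_of_le_of_lt (by positivity) hr
  have hr2 : 1 / (N * (N - 1)) < r ^ 2 := by
    have := pow_lt_pow_left₀ hr (by positivity) (two_ne_zero)
    rwa [div_pow, one_pow, Real.sq_sqrt (by nlinarith)] at this
  set a := Real.sqrt (r ^ 2 * ((N - 1) / N)) with ha
  have ha2 : a ^ 2 = r ^ 2 * ((N - 1) / N) :=
    Real.sq_sqrt (mul_nonneg (sq_nonneg _) (div_nonneg (by linarith) (by linarith)))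
  have haN : 1 / N < a := by
    rw [ha]
    apply Real.lt_sqrt_of_sq_lt
    have h1 : 1 / (N * (N - 1)) * ((N - 1) / N) < r ^ 2 * ((N - 1) / N) :=
      mul_lt_mul_of_pos_right hr2 (div_pos (by linarith) (by linarith))
    have h2 : 1 / (N * (N - 1)) * ((N - 1) / N) = (1 / N) ^ 2 := by field_simp
    linarith
  -- diagonal perturbation
  let d : Fin n × Fin k → ℝ := fun p => if p = p0 then -a else a / (N - 1)
  have hsum : ∀ x y : ℝ, ∑ p : Fin n × Fin k, (if p = p0 then x else y) = x + (N - 1) * y := by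
    intro x y
    have : ∀ p : Fin n × Fin k, (if p = p0 then x else y) = y + (if p = p0 then x - y else 0) := by
      intro p; split_ifs <;> ring
    simp_rw [this]
    rw [Finset.sum_add_distrib, Finset.sum_const, Finset.card_univ, nsmul_eq_mul, hcard]
    simp
    ring
  have hd0 : ∑ p, d p = 0 := by
    rw [hsum]; field_simp; ring
  have hd2 : ∑ p, d p ^ 2 = r ^ 2 := by
    have : ∀ p, d p ^ 2 = if p = p0 then a ^ 2 else (a / (N - 1)) ^ 2 := by
      intro p; simp only [d]; split_ifs <;> ring
    simp_rw [this]
    rw [hsum, div_pow, ha2]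
    field_simp
    ring
  refine ⟨Matrix.diagonal (fun p => ((N⁻¹ + d p : ℝ) : ℂ)), ?_, ?_, ?_, ?_⟩
  · rw [Matrix.isHermitian_diagonal_iff]
    intro p
    simp [IsSelfAdjoint]
  · rw [Matrix.trace_diagonal, ← Complex.ofReal_sum, Finset.sum_add_distrib, hd0, Finset.sum_const,
      Finset.card_univ, nsmul_eq_mul, hcard]
    simp [hN0]
  · have : Matrix.diagonal (fun p => ((N⁻¹ + d p : ℝ) : ℂ)) - (N : ℂ)⁻¹ • 1 =
        Matrix.diagonal (fun p => (d p : ℂ)) := by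
      ext p q
      by_cases h : p = q
      · subst h; simp
      · simp [h]
    rw [this, frobNorm]
    have h2 : ∑ p, ∑ q, ‖Matrix.diagonal (fun p => (d p : ℂ)) p q‖ ^ 2 = r ^ 2 := by
      rw [← hd2]
      refine Finset.sum_congr rfl fun p _ => ?_
      rw [Finset.sum_eq_single p]
      · simp
      · intro q _ hq; simp [hq.symm]
      · simp
    rw [h2, Real.sqrt_sq hr0.le]
  · intro h
    have := (posSemidef_diag_nonneg h p0).1
    simp [d] at this
    rw [one_div] at haN
    linarith

end GB

/-- **The Gurvits–Barnum separable ball.**  (i) Every Hermitian matrix of trace `1` within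
Frobenius distance `(nk(nk−1))^{−1/2}` of the maximally mixed state `I/(nk)` is a separable
density matrix.  (ii) The radius is optimal: for every larger radius `r` there is a Hermitian
trace-one matrix within distance `r` of `I/(nk)` which is not positive semidefinite; hence the
above ball is the largest Euclidean ball centered at `I/(nk)` contained in the set of density
matrices. -/
theorem gurvits_barnum_separable_ball
    (n k : ℕ) (hn : 1 ≤ n) (hk : 1 ≤ k) (hnk : 2 ≤ n * k) :
    (∀ ρ : Matrix (Fin n × Fin k) (Fin n × Fin k) ℂ,
      ρ.IsHermitian → ρ.trace = 1 →
      frobNorm (ρ - (((n * k : ℕ) : ℂ))⁻¹ • 1) ≤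
        1 / Real.sqrt (((n * k : ℕ) : ℝ) * (((n * k : ℕ) : ℝ) - 1)) →
      IsSeparableState ρ) ∧
    (∀ r : ℝ, 1 / Real.sqrt (((n * k : ℕ) : ℝ) * (((n * k : ℕ) : ℝ) - 1)) < r →
      ∃ σ : Matrix (Fin n × Fin k) (Fin n × Fin k) ℂ,
        σ.IsHermitian ∧ σ.trace = 1 ∧
        frobNorm (σ - (((n * k : ℕ) : ℂ))⁻¹ • 1) ≤ r ∧ ¬ σ.PosSemidef) := by
  exact ⟨fun ρ h1 h2 h3 => GB.part_one hnk ρ h1 h2 h3, fun r hr => GB.part_two hnk r hr⟩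
end

section
/- (Peres PPT criterion) Let n, k ≥ 1 and let ρ ∈ M_{nk}(ℂ), indexed by pairs in {1,…,n}×{1,…,k}, be a separable density matrix. Then its partial transpose ρ^Γ, defined entrywise by (ρ^Γ)_{(i,a),(j,b)} = ρ_{(i,b),(j,a)}, is positive semidefinite. -/
open scoped Kronecker ComplexOrder

/-- The partial transpose (on the second factor):
`(ρ^Γ)_{(i,a),(j,b)} = ρ_{(i,b),(j,a)}`. -/
def partialTranspose {n k : ℕ}
    (ρ : Matrix (Fin n × Fin k) (Fin n × Fin k) ℂ) :
    Matrix (Fin n × Fin k) (Fin n × Fin k) ℂ :=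
  Matrix.of fun p q => ρ (p.1, q.2) (q.1, p.2)

/-- **The Peres PPT criterion**: the partial transpose of a separable density matrix is
positive semidefinite. -/
theorem ppt_criterion {n k : ℕ}
    (ρ : Matrix (Fin n × Fin k) (Fin n × Fin k) ℂ)
    (hsep : IsSeparableState ρ) :
    (partialTranspose ρ).PosSemidef := by
  obtain ⟨m, p, σ, τ, hp, -, hσ, hτ, rfl⟩ := hsep
  have h : partialTranspose (∑ i, (p i : ℂ) • (σ i ⊗ₖ τ i))
      = ∑ i, (p i : ℂ) • (σ i ⊗ₖ (τ i).transpose) := by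
    ext a b
    simp [partialTranspose, Matrix.sum_apply, Matrix.kroneckerMap_apply]
  rw [h]
  refine Matrix.posSemidef_sum _ fun i _ => ?_
  exact ((hσ i).1.kronecker (hτ i).1.transpose).smul (by exact_mod_cast hp i)
end

section
/- Let n, k ≥ 1 and let ρ ∈ M_{nk}(ℂ), indexed by pairs in {1,…,n}×{1,…,k}, be a density matrix whose partial transpose ρ^Γ (defined by (ρ^Γ)_{(i,a),(j,b)} = ρ_{(i,b),(j,a)}) is positive semidefinite. Then its reduction ρ^{red}, defined entrywise by (ρ^{red})_{(i,a),(j,b)} = δ_{ab}·Σ_{c=1}^{k} ρ_{(i,c),(j,c)} − ρ_{(i,a),(j,b)}, is also positive semidefinite. That is, the PPT criterion is stronger than the reduction criterion: every PPT state satisfies the reduction criterion. -/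
open scoped ComplexOrder

/-- The reduction map applied to the second factor:
`(ρ^{red})_{(i,a),(j,b)} = δ_{ab}·Σ_c ρ_{(i,c),(j,c)} − ρ_{(i,a),(j,b)}`. -/
noncomputable def reduction {n k : ℕ}
    (ρ : Matrix (Fin n × Fin k) (Fin n × Fin k) ℂ) :
    Matrix (Fin n × Fin k) (Fin n × Fin k) ℂ :=
  Matrix.of fun p q =>
    (if p.2 = q.2 then ∑ c : Fin k, ρ (p.1, c) (q.1, c) else 0) - ρ p q

/-- The operator `I ⊗ (E_cd - E_dc)`. -/
def krausB (n : ℕ) {k : ℕ} (c d : Fin k) : Matrix (Fin n × Fin k) (Fin n × Fin k) ℂ :=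
  Matrix.of fun p q =>
    (if p = (q.1, c) then (if q.2 = d then (1 : ℂ) else 0) else 0)
      - (if p = (q.1, d) then (if q.2 = c then (1 : ℂ) else 0) else 0)

lemma krausB_apply {n k : ℕ} (M : Matrix (Fin n × Fin k) (Fin n × Fin k) ℂ) (c d : Fin k)
    (p q : Fin n × Fin k) :
    ((krausB n c d).conjTranspose * M * krausB n c d) p q =
      (if p.2 = d then 1 else 0) * ((if q.2 = d then 1 else 0) * M (p.1, c) (q.1, c))
      - (if p.2 = c then 1 else 0) * ((if q.2 = d then 1 else 0) * M (p.1, d) (q.1, c))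
      - (if p.2 = d then 1 else 0) * ((if q.2 = c then 1 else 0) * M (p.1, c) (q.1, d))
      + (if p.2 = c then 1 else 0) * ((if q.2 = c then 1 else 0) * M (p.1, d) (q.1, d)) := by
  have h1 : ∀ r, ((krausB n c d).conjTranspose * M) p r =
      (if p.2 = d then 1 else 0) * M (p.1, c) r - (if p.2 = c then 1 else 0) * M (p.1, d) r := by
    intro r
    simp only [Matrix.mul_apply, Matrix.conjTranspose_apply, krausB, Matrix.of_apply, star_sub,
      apply_ite star, star_one, star_zero, sub_mul, Finset.sum_sub_distrib]
    congr 1 <;> simp only [ite_mul, one_mul, zero_mul, Finset.sum_ite_eq', Finset.mem_univ, if_true]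
  have h2 : ∀ N : Matrix (Fin n × Fin k) (Fin n × Fin k) ℂ, (N * krausB n c d) p q =
      (if q.2 = d then 1 else 0) * N p (q.1, c) - (if q.2 = c then 1 else 0) * N p (q.1, d) := by
    intro N
    simp only [Matrix.mul_apply, krausB, Matrix.of_apply, mul_sub, Finset.sum_sub_distrib]
    congr 1 <;> simp
  rw [h2, h1, h1]
  ring

lemma reduction_eq {n k : ℕ} (ρ : Matrix (Fin n × Fin k) (Fin n × Fin k) ℂ) :
    reduction ρ = (1 / 2 : ℂ) • ∑ c : Fin k, ∑ d : Fin k,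
      ((krausB n c d).conjTranspose * partialTranspose ρ * krausB n c d) := by
  ext ⟨i, a⟩ ⟨j, b⟩
  simp only [Matrix.smul_apply, Matrix.sum_apply, krausB_apply, partialTranspose, reduction,
    Matrix.of_apply, Finset.sum_add_distrib, Finset.sum_sub_distrib, ite_mul, one_mul, zero_mul,
    Finset.sum_ite_eq, Finset.mem_univ, if_true, smul_eq_mul, Finset.sum_ite_irrel,
    Finset.sum_const_zero]
  by_cases h : a = b
  · subst h
    simp
    ring
  · simp [h, Ne.symm h]
    ring

/-- **PPT implies the reduction criterion**: if a density matrix has positive-semidefinite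
partial transpose, then its reduction is also positive semidefinite. -/
theorem ppt_implies_reduction {n k : ℕ}
    (ρ : Matrix (Fin n × Fin k) (Fin n × Fin k) ℂ)
    (hρ : ρ.PosSemidef) (htr : ρ.trace = 1)
    (hppt : (partialTranspose ρ).PosSemidef) :
    (reduction ρ).PosSemidef := by
  rw [reduction_eq]
  refine Matrix.PosSemidef.smul ?_ (by norm_num [Complex.le_def])
  exact Matrix.posSemidef_sum _ fun c _ => Matrix.posSemidef_sum _ fun d _ =>
    hppt.conjTranspose_mul_mul_same _
end

section
/- Let n ≥ 1 and k = 2, and let ρ ∈ M_{2n}(ℂ), indexed by pairs in {1,…,n}×{1,2}, be a density matrix. Then the partial transpose ρ^Γ (defined by (ρ^Γ)_{(i,a),(j,b)} = ρ_{(i,b),(j,a)}) is positive semidefinite if and only if the reduction ρ^{red} (defined by (ρ^{red})_{(i,a),(j,b)} = δ_{ab}·Σ_{c=1}^{2} ρ_{(i,c),(j,c)} − ρ_{(i,a),(j,b)}) is positive semidefinite. That is, when the second subsystem is a qubit, the PPT and reduction criteria are equivalent. -/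
open scoped ComplexOrder

theorem flip_sign_posSemidef {n : ℕ}
    (M N : Matrix (Fin n × Fin 2) (Fin n × Fin 2) ℂ) (hM : M.PosSemidef)
    (h : ∀ p q, N p q = (if p.2 = 0 then 1 else -1) * M (p.1, 1 - p.2) (q.1, 1 - q.2) *
      (if q.2 = 0 then 1 else -1)) : N.PosSemidef := by
  have h1 := (hM.submatrix (fun p : Fin n × Fin 2 => (p.1, 1 - p.2))).conjTranspose_mul_mul_same
    (Matrix.diagonal (fun p : Fin n × Fin 2 => if p.2 = 0 then (1 : ℂ) else -1))
  convert h1 using 1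
  ext p q
  rw [h, Matrix.diagonal_conjTranspose, Matrix.mul_diagonal, Matrix.diagonal_mul]
  simp only [Matrix.submatrix_apply, Pi.star_apply]
  split_ifs <;> simp

/-- **Equivalence of PPT and reduction criteria when the second subsystem is a qubit**: for a
density matrix on `ℂ^n ⊗ ℂ²`, the partial transpose is positive semidefinite if and only if
the reduction is positive semidefinite. -/
theorem ppt_iff_reduction_qubit {n : ℕ}
    (ρ : Matrix (Fin n × Fin 2) (Fin n × Fin 2) ℂ)
    (hρ : ρ.PosSemidef) (htr : ρ.trace = 1) :
    (partialTranspose ρ).PosSemidef ↔ (reduction ρ).PosSemidef := by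
  constructor
  · intro h
    refine flip_sign_posSemidef _ _ h ?_
    rintro ⟨i, a⟩ ⟨j, b⟩
    fin_cases a <;> fin_cases b <;> simp [partialTranspose, reduction]
  · intro h
    refine flip_sign_posSemidef _ _ h ?_
    rintro ⟨i, a⟩ ⟨j, b⟩
    fin_cases a <;> fin_cases b <;> simp [partialTranspose, reduction]
end

section
/- (Realignment criterion) Let n, k ≥ 1 and let ρ ∈ M_{nk}(ℂ), indexed by pairs in {1,…,n}×{1,…,k}, be a separable density matrix. Define the realignment ρ^{rln} ∈ M_{n²×k²}(ℂ), with rows indexed by pairs (i,j) ∈ {1,…,n}² and columns by pairs (a,b) ∈ {1,…,k}², by (ρ^{rln})_{(i,j),(a,b)} = ρ_{(i,a),(j,b)}. Then the trace norm (sum of singular values) of ρ^{rln} satisfies ‖ρ^{rln}‖₁ ≤ 1. -/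
open scoped Kronecker ComplexOrder

/-- The trace norm (sum of the singular values, i.e. `Tr√(A*A)`) of a rectangular complex
matrix, computed as the sum of the square roots of the eigenvalues of the Hermitian
positive-semidefinite matrix `Aᴴ·A`. -/
noncomputable def traceNorm {m l : Type*} [Fintype m] [Fintype l] [DecidableEq l]
    (A : Matrix m l ℂ) : ℝ :=
  ∑ i, Real.sqrt ((Matrix.isHermitian_conjTranspose_mul_self A).eigenvalues i)

/-- The realignment `ρ^{rln} ∈ M_{n²×k²}(ℂ)` of a matrix `ρ ∈ M_{nk}(ℂ)`:
`(ρ^{rln})_{(i,j),(a,b)} = ρ_{(i,a),(j,b)}`. -/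
def realignment {n k : ℕ}
    (ρ : Matrix (Fin n × Fin k) (Fin n × Fin k) ℂ) :
    Matrix (Fin n × Fin n) (Fin k × Fin k) ℂ :=
  Matrix.of fun ij ab => ρ (ij.1, ab.1) (ij.2, ab.2)

open scoped InnerProductSpace in
/-- Bessel's inequality for a family whose members are orthonormal or zero. -/
theorem bessel_aux {l m : Type*} [Fintype l] [DecidableEq l] [Fintype m]
    (w : l → EuclideanSpace ℂ m) (s : l → ℝ)
    (hw : ∀ i j, ⟪w i, w j⟫_ℂ = if i = j then ((s i : ℂ)) ^ 2 else 0)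
    (x : EuclideanSpace ℂ m) :
    ∑ i, ‖⟪((s i : ℂ))⁻¹ • w i, x⟫_ℂ‖ ^ 2 ≤ ‖x‖ ^ 2 := by
  have ho : Orthonormal ℂ (fun i : {i // s i ≠ 0} => ((s i : ℂ))⁻¹ • w i) := by
    rw [orthonormal_iff_ite]
    rintro ⟨i, hi⟩ ⟨j, hj⟩
    have hi' : (s i : ℂ) ≠ 0 := by exact_mod_cast hi
    simp only [inner_smul_left, inner_smul_right, hw, Subtype.mk.injEq]
    split_ifs with h
    · subst h
      simp only [map_inv₀, Complex.conj_ofReal]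
      field_simp
    · simp
  have h1 := ho.sum_inner_products_le x (s := Finset.univ)
  have h2 : ∑ i, ‖⟪((s i : ℂ))⁻¹ • w i, x⟫_ℂ‖ ^ 2
      = ∑ i ∈ Finset.univ.filter (fun i => s i ≠ 0), ‖⟪((s i : ℂ))⁻¹ • w i, x⟫_ℂ‖ ^ 2 := by
    rw [Finset.sum_filter]
    refine Finset.sum_congr rfl fun i _ => ?_
    split_ifs with h
    · rfl
    · simp at h
      simp [h]
  rw [h2, Finset.sum_subtype (p := fun i => s i ≠ 0) _ (by simp)]
  exact h1

open scoped InnerProductSpace in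
theorem traceNorm_le_aux {l m : Type*} [Fintype l] [DecidableEq l] [Fintype m]
    {N : ℕ} (p : Fin N → ℝ) (hp : ∀ t, 0 ≤ p t) (hp1 : ∑ t, p t = 1)
    (x : Fin N → EuclideanSpace ℂ m) (y : Fin N → EuclideanSpace ℂ l)
    (hx : ∀ t, ‖x t‖ ^ 2 ≤ 1) (hy : ∀ t, ‖y t‖ ^ 2 ≤ 1)
    (A : Matrix m l ℂ) (hA : ∀ a b, A a b = ∑ t, (p t : ℂ) * (x t a * star (y t b))) :
    traceNorm A ≤ 1 := by
  classical
  unfold traceNorm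
  set H := Matrix.isHermitian_conjTranspose_mul_self A
  set s : l → ℝ := fun i => Real.sqrt (H.eigenvalues i) with hs
  set V := H.eigenvectorBasis with hV
  have hs2 : ∀ i, (s i) ^ 2 = H.eigenvalues i := fun i =>
    Real.sq_sqrt ((Matrix.posSemidef_conjTranspose_mul_self A).eigenvalues_nonneg i)
  set w : l → EuclideanSpace ℂ m := fun i => WithLp.toLp 2 (A.mulVec (V i)) with hwdef
  have hw : ∀ i j, ⟪w i, w j⟫_ℂ = if i = j then ((s i : ℂ)) ^ 2 else 0 := by
    intro i j
    have h1 : ⟪w i, w j⟫_ℂ = ⟪V i, WithLp.toLp 2 ((A.conjTranspose * A).mulVec (V j))⟫_ℂ := by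
      simp only [hwdef, EuclideanSpace.inner_eq_star_dotProduct]
      rw [dotProduct_comm, Matrix.star_mulVec, ← Matrix.dotProduct_mulVec, Matrix.mulVec_mulVec,
        dotProduct_comm]
    rw [h1, H.mulVec_eigenvectorBasis j, WithLp.toLp_smul]
    have h2 := orthonormal_iff_ite.mp V.orthonormal i j
    rw [WithLp.toLp_ofLp, inner_smul_right_eq_smul, h2]
    split_ifs with h
    · subst h
      rw [← hs2]
      simp
    · simp
  have hwx : ∀ i, w i = ∑ t, ((p t : ℂ) * ⟪y t, V i⟫_ℂ) • x t := by
    intro i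
    ext a
    simp only [hwdef, Matrix.mulVec, dotProduct, hA, PiLp.inner_apply, RCLike.inner_apply,
      WithLp.ofLp_sum, WithLp.ofLp_smul, Finset.sum_apply, Pi.smul_apply, smul_eq_mul,
      Finset.sum_mul, Finset.mul_sum]
    rw [Finset.sum_comm]
    refine Finset.sum_congr rfl fun t _ => Finset.sum_congr rfl fun b _ => ?_
    simp only [Complex.star_def]
    ring
  set u : l → EuclideanSpace ℂ m := fun i => ((s i : ℂ))⁻¹ • w i with hu
  have hsi : ∀ i, (s i : ℂ) = ⟪u i, w i⟫_ℂ := by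
    intro i
    simp only [hu, inner_smul_left, hw, if_true, map_inv₀, Complex.conj_ofReal]
    by_cases h : s i = 0
    · simp [h]
    · have : (s i : ℂ) ≠ 0 := by exact_mod_cast h
      field_simp
  have hbound : ∀ i, s i ≤ ∑ t, p t * ((‖⟪u i, x t⟫_ℂ‖ ^ 2 + ‖⟪y t, V i⟫_ℂ‖ ^ 2) / 2) := by
    intro i
    have h0 : s i = ‖(s i : ℂ)‖ := by
      rw [Complex.norm_real, Real.norm_of_nonneg (Real.sqrt_nonneg _)]
    rw [h0, hsi, hwx, inner_sum]
    refine (norm_sum_le _ _).trans (Finset.sum_le_sum fun t _ => ?_)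
    rw [inner_smul_right, norm_mul, norm_mul, Complex.norm_real, Real.norm_of_nonneg (hp t),
      mul_assoc]
    refine mul_le_mul_of_nonneg_left ?_ (hp t)
    nlinarith [sq_nonneg (‖⟪u i, x t⟫_ℂ‖ - ‖⟪y t, V i⟫_ℂ‖)]
  calc ∑ i, s i ≤ ∑ i, ∑ t, p t * ((‖⟪u i, x t⟫_ℂ‖ ^ 2 + ‖⟪y t, V i⟫_ℂ‖ ^ 2) / 2) :=
        Finset.sum_le_sum fun i _ => hbound i
    _ = ∑ t, p t * ((∑ i, ‖⟪u i, x t⟫_ℂ‖ ^ 2 + ∑ i, ‖⟪y t, V i⟫_ℂ‖ ^ 2) / 2) := by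
        rw [Finset.sum_comm]
        refine Finset.sum_congr rfl fun t _ => ?_
        rw [← Finset.mul_sum, ← Finset.sum_div, Finset.sum_add_distrib]
    _ ≤ ∑ t, p t * 1 := by
        refine Finset.sum_le_sum fun t _ => mul_le_mul_of_nonneg_left ?_ (hp t)
        have h1 := (bessel_aux w s hw (x t)).trans (hx t)
        have h2 := (V.sum_sq_norm_inner_left (y t)).le.trans (hy t)
        change ∑ i, ‖⟪u i, x t⟫_ℂ‖ ^ 2 ≤ 1 at h1
        linarith
    _ = 1 := by simp [hp1]

open scoped MatrixOrder Matrix.Norms.L2Operator in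
theorem exists_factor_aux {n : ℕ} (σ : Matrix (Fin n) (Fin n) ℂ) (h : σ.PosSemidef) :
    ∃ B : Matrix (Fin n) (Fin n) ℂ, σ = B.conjTranspose * B :=
  CStarAlgebra.nonneg_iff_eq_star_mul_self.mp h.nonneg

theorem density_sum_sq_le {n : ℕ} (σ : Matrix (Fin n) (Fin n) ℂ) (h : IsDensityMatrix σ) :
    ∑ ij : Fin n × Fin n, ‖σ ij.1 ij.2‖ ^ 2 ≤ 1 := by
  obtain ⟨hpos, htr⟩ := h
  obtain ⟨B, rfl⟩ := exists_factor_aux σ hpos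
  let b : Fin n → EuclideanSpace ℂ (Fin n) := fun i => WithLp.toLp 2 (fun c => B c i)
  have hb : ∀ i j, (B.conjTranspose * B) i j = inner ℂ (b i) (b j) := by
    intro i j
    simp [Matrix.mul_apply, b, PiLp.inner_apply, mul_comm]
  have hsum : ∑ i, ‖b i‖ ^ 2 = 1 := by
    have : (∑ i, ((‖b i‖ ^ 2 : ℝ) : ℂ)) = 1 := by
      rw [← htr, Matrix.trace]
      refine Finset.sum_congr rfl fun i _ => ?_
      rw [Matrix.diag_apply, hb, inner_self_eq_norm_sq_to_K]
      simp
    exact_mod_cast this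
  calc ∑ ij : Fin n × Fin n, ‖(B.conjTranspose * B) ij.1 ij.2‖ ^ 2
      ≤ ∑ ij : Fin n × Fin n, ‖b ij.1‖ ^ 2 * ‖b ij.2‖ ^ 2 := by
        refine Finset.sum_le_sum fun ij _ => ?_
        rw [hb, ← mul_pow]
        exact pow_le_pow_left₀ (norm_nonneg _) (norm_inner_le_norm _ _) 2
    _ = (∑ i, ‖b i‖ ^ 2) * ∑ j, ‖b j‖ ^ 2 := by
        rw [Finset.sum_mul_sum, Fintype.sum_prod_type]
    _ = 1 := by rw [hsum, one_mul]
    _ ≤ 1 := le_rfl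

/-- **The realignment criterion**: a separable density matrix `ρ` on `ℂ^n ⊗ ℂ^k` satisfies
`‖ρ^{rln}‖₁ ≤ 1`. -/
theorem realignment_criterion {n k : ℕ}
    (ρ : Matrix (Fin n × Fin k) (Fin n × Fin k) ℂ)
    (hsep : IsSeparableState ρ) :
    traceNorm (realignment ρ) ≤ 1 := by
  obtain ⟨N, p, σ, τ, hp, hp1, hσ, hτ, rfl⟩ := hsep
  refine traceNorm_le_aux p hp hp1 (fun t => WithLp.toLp 2 (fun ij => σ t ij.1 ij.2))
    (fun t => WithLp.toLp 2 (fun ab => star (τ t ab.1 ab.2))) ?_ ?_ _ ?_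
  · intro t
    rw [EuclideanSpace.norm_sq_eq]
    exact density_sum_sq_le _ (hσ t)
  · intro t
    rw [EuclideanSpace.norm_sq_eq]
    simpa only [norm_star] using density_sum_sq_le _ (hτ t)
  · intro a b
    simp [realignment, Matrix.sum_apply]
end

section
/- (Hayden–Winter trick) Let d, k, n ≥ 1 with d ≤ kn, and let V ∈ M_{kn×d}(ℂ), rows indexed by pairs in {1,…,k}×{1,…,n}, be an isometry: V*V = I_d. Define the quantum channel Φ : M_d(ℂ) → M_k(ℂ) by Φ(X)_{ij} = Σ_{a=1}^{n} (V X V*)_{(i,a),(j,a)} (partial trace over ℂ^n of V X V*), and its conjugate channel Φ̄ by Φ̄(X)_{ij} = Σ_{a=1}^{n} (V̄ X V̄*)_{(i,a),(j,a)}, where V̄ is the entrywise complex conjugate of V. Let E_{st} ∈ M_d(ℂ) denote the matrix units and define the output of the maximally entangled state Z = [Φ ⊗ Φ̄](Ω_d) = (1/d) Σ_{s,t=1}^{d} Φ(E_{st}) ⊗ Φ̄(E_{st}) ∈ M_{k²}(ℂ) (Kronecker product). Then Z is a density matrix whose largest eigenvalue satisfies ‖Z‖ ≥ d/(nk). -/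
open Matrix
open scoped Kronecker ComplexOrder

/-- The reshuffled projection `V V*`. -/
noncomputable def hwM {d k n : ℕ} (V : Matrix (Fin k × Fin n) (Fin d) ℂ) :
    Matrix (Fin k × Fin k) (Fin n × Fin n) ℂ :=
  Matrix.of fun p q => (V * Vᴴ) (p.1, q.1) (p.2, q.2)

theorem hw_trace {d k n : ℕ} (V : Matrix (Fin k × Fin n) (Fin d) ℂ) (hV : Vᴴ * V = 1) :
    (V * Vᴴ).trace = d := by
  rw [Matrix.trace_mul_comm, hV]; simp

theorem hw_entry {d k n : ℕ} (V : Matrix (Fin k × Fin n) (Fin d) ℂ) (i i' : Fin k) (s t : Fin d) :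
    ∑ a : Fin n, (V * Matrix.single s t (1:ℂ) * Vᴴ) (i, a) (i', a)
      = ∑ a : Fin n, V (i, a) s * star (V (i', a) t) := by
  refine Finset.sum_congr rfl fun a _ => ?_
  rw [Matrix.mul_apply, Finset.sum_eq_single t]
  · simp
  · intro b _ hb
    rw [Matrix.mul_single_apply_of_ne _ _ _ _ _ hb]; simp
  · simp

theorem hw_sum {d k n : ℕ} (V : Matrix (Fin k × Fin n) (Fin d) ℂ) :
    ∑ s : Fin d, ∑ t : Fin d,
      (Matrix.of fun i j : Fin k => ∑ a : Fin n,
          (V * Matrix.single s t (1:ℂ) * Vᴴ) (i, a) (j, a)) ⊗ₖ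
      (Matrix.of fun i j : Fin k => ∑ a : Fin n,
          (V.map star * Matrix.single s t (1:ℂ) * (V.map star)ᴴ) (i, a) (j, a))
      = hwM V * (hwM V)ᴴ := by
  ext ⟨i, j⟩ ⟨i', j'⟩
  simp only [Matrix.sum_apply, Matrix.kroneckerMap_apply, Matrix.of_apply, hw_entry]
  simp only [Matrix.mul_apply, hwM, Matrix.of_apply, Matrix.conjTranspose_apply, star_sum,
    star_mul', star_star, Matrix.map_apply, Fintype.sum_prod_type, Finset.sum_mul_sum]
  rw [Finset.sum_congr rfl fun s _ => Finset.sum_comm]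
  rw [Finset.sum_comm]
  refine Finset.sum_congr rfl fun a _ => ?_
  rw [Finset.sum_congr rfl fun s _ => Finset.sum_comm]
  rw [Finset.sum_comm]
  refine Finset.sum_congr rfl fun b _ => ?_
  refine Finset.sum_congr rfl fun s _ => ?_
  refine Finset.sum_congr rfl fun t _ => ?_
  ring

theorem hw_trM {d k n : ℕ} (V : Matrix (Fin k × Fin n) (Fin d) ℂ) (hV : Vᴴ * V = 1) :
    (hwM V * (hwM V)ᴴ).trace = d := by
  have h2 : (V * Vᴴ) * (V * Vᴴ)ᴴ = V * Vᴴ := by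
    rw [Matrix.conjTranspose_mul, Matrix.conjTranspose_conjTranspose, Matrix.mul_assoc,
      ← Matrix.mul_assoc Vᴴ, hV, Matrix.one_mul]
  rw [← hw_trace V hV, ← h2]
  generalize hP : V * Vᴴ = P
  simp only [hwM, hP]
  simp only [Matrix.trace, Matrix.diag_apply, Matrix.mul_apply,
    Matrix.of_apply, Matrix.conjTranspose_apply, Fintype.sum_prod_type]
  refine Finset.sum_congr rfl fun i _ => ?_
  rw [Finset.sum_comm]

theorem hw_vec {d k n : ℕ} (hk : 1 ≤ k) (V : Matrix (Fin k × Fin n) (Fin d) ℂ) (hV : Vᴴ * V = 1)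
    (c : ℝ) (v : Fin k × Fin k → ℂ) (hv : v = fun p => if p.1 = p.2 then (c : ℂ) else 0) :
    c ^ 2 * (d : ℝ) ^ 2 ≤ n * (star v ⬝ᵥ (hwM V * (hwM V)ᴴ).mulVec v).re := by
  set w := (hwM V)ᴴ *ᵥ v with hw
  have h1 : star v ⬝ᵥ (hwM V * (hwM V)ᴴ).mulVec v = star w ⬝ᵥ w := by
    rw [← Matrix.mulVec_mulVec, Matrix.dotProduct_mulVec, hw, Matrix.star_mulVec,
      Matrix.conjTranspose_conjTranspose]
  have h2 : (star w ⬝ᵥ w).re = ∑ a, ∑ b, ‖w (a, b)‖ ^ 2 := by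
    rw [dotProduct, Complex.re_sum, Fintype.sum_prod_type]
    refine Finset.sum_congr rfl fun a _ => Finset.sum_congr rfl fun b _ => ?_
    rw [Pi.star_apply, Complex.star_def, ← Complex.normSq_eq_conj_mul_self, Complex.ofReal_re,
      Complex.normSq_eq_norm_sq]
  have h3 : ∑ a, w (a, a) = c * d := by
    have h5 : ∑ a, w (a, a) = c * star ((V * Vᴴ).trace) := by
      simp only [hw, Matrix.mulVec, dotProduct, hv, Fintype.sum_prod_type, mul_ite, mul_zero,
        Finset.sum_ite_eq, Finset.mem_univ, if_true, Matrix.trace, Matrix.diag_apply, star_sum,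
        Matrix.conjTranspose_apply, hwM, Matrix.of_apply, Finset.mul_sum]
      rw [Finset.sum_comm]
      refine Finset.sum_congr rfl fun a _ => Finset.sum_congr rfl fun b _ => ?_
      rw [mul_comm]
    rw [h5, hw_trace V hV]; simp
  have h4 : c ^ 2 * (d : ℝ) ^ 2 = ‖∑ a, w (a, a)‖ ^ 2 := by
    rw [h3]; simp [mul_pow]
  rw [h1, h2, h4]
  calc ‖∑ a, w (a, a)‖ ^ 2 ≤ (∑ a, ‖w (a, a)‖) ^ 2 := by
        gcongr; exact norm_sum_le _ _
    _ ≤ n * ∑ a, ‖w (a, a)‖ ^ 2 := by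
        simpa using sq_sum_le_card_mul_sum_sq (s := Finset.univ) (f := fun a : Fin n => ‖w (a, a)‖)
    _ ≤ n * ∑ a, ∑ b, ‖w (a, b)‖ ^ 2 := by
        gcongr with a
        exact Finset.single_le_sum (f := fun b => ‖w (a, b)‖ ^ 2) (fun _ _ => by positivity)
          (Finset.mem_univ a)

/-- **The Hayden–Winter trick.**  Let `V : ℂ^d → ℂ^k ⊗ ℂ^n` be an isometry, let
`Φ(X) = Tr_{ℂ^n}(V X V*)` be the associated quantum channel and `Φ̄` its conjugate channel
(built from the entrywise conjugate isometry `V̄`).  Then the output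
`Z = [Φ ⊗ Φ̄](Ω_d) = (1/d)·Σ_{s,t} Φ(E_{st}) ⊗ Φ̄(E_{st})` of the maximally entangled state is
a density matrix whose largest eigenvalue is at least `d/(nk)`; the latter is expressed by the
existence of a unit vector `v` with `⟨v, Z v⟩ ≥ d/(nk)`. -/
theorem hayden_winter_trick
    (d k n : ℕ) (hd : 1 ≤ d) (hk : 1 ≤ k) (hn : 1 ≤ n) (hdkn : d ≤ k * n)
    (V : Matrix (Fin k × Fin n) (Fin d) ℂ) (hV : Vᴴ * V = 1) :
    let Φ : Matrix (Fin d) (Fin d) ℂ → Matrix (Fin k) (Fin k) ℂ := fun X =>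
      Matrix.of fun i j => ∑ a : Fin n, (V * X * Vᴴ) (i, a) (j, a)
    let Φc : Matrix (Fin d) (Fin d) ℂ → Matrix (Fin k) (Fin k) ℂ := fun X =>
      Matrix.of fun i j =>
        ∑ a : Fin n, (V.map star * X * (V.map star)ᴴ) (i, a) (j, a)
    let Z : Matrix (Fin k × Fin k) (Fin k × Fin k) ℂ :=
      ((d : ℂ))⁻¹ • ∑ s : Fin d, ∑ t : Fin d,
        (Φ (Matrix.single s t 1)) ⊗ₖ (Φc (Matrix.single s t 1))
    Z.PosSemidef ∧ Z.trace = 1 ∧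
      ∃ v : Fin k × Fin k → ℂ, (∑ p, ‖v p‖ ^ 2 = 1) ∧
        (d : ℝ) / (n * k) ≤ (star v ⬝ᵥ Z.mulVec v).re := by
  intro Φ Φc Z
  have hZ : Z = ((d : ℂ))⁻¹ • (hwM V * (hwM V)ᴴ) := by
    rw [← hw_sum V]
  have hd0 : (d : ℂ) ≠ 0 := by exact_mod_cast (by omega : d ≠ 0)
  have hdp : (0 : ℝ) < d := by exact_mod_cast hd
  have hkp : (0 : ℝ) < k := by exact_mod_cast hk
  have hnp : (0 : ℝ) < n := by exact_mod_cast hn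
  rw [hZ]
  refine ⟨?_, ?_, ?_⟩
  · refine (Matrix.posSemidef_self_mul_conjTranspose _).smul ?_
    have : ((d : ℂ))⁻¹ = (((d : ℝ)⁻¹ : ℝ) : ℂ) := by simp
    rw [this, Complex.zero_le_real]
    positivity
  · rw [Matrix.trace_smul, hw_trM V hV, smul_eq_mul, inv_mul_cancel₀ hd0]
  · have hc : ((Real.sqrt k)⁻¹) ^ 2 = (k : ℝ)⁻¹ := by
      rw [inv_pow, Real.sq_sqrt hkp.le]
    refine ⟨fun p => if p.1 = p.2 then (((Real.sqrt k)⁻¹ : ℝ) : ℂ) else 0, ?_, ?_⟩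
    · have : ∀ p : Fin k × Fin k,
          ‖(if p.1 = p.2 then (((Real.sqrt k)⁻¹ : ℝ) : ℂ) else 0)‖ ^ 2
            = if p.1 = p.2 then (k : ℝ)⁻¹ else 0 := by
        intro p
        split_ifs
        · rw [Complex.norm_real, Real.norm_eq_abs, sq_abs, hc]
        · simp
      rw [Finset.sum_congr rfl fun p _ => this p, Fintype.sum_prod_type]
      simp [hkp.ne']
    · have h := hw_vec hk V hV ((Real.sqrt k)⁻¹) _ rfl
      rw [hc] at h
      rw [Matrix.smul_mulVec, dotProduct_smul, smul_eq_mul]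
      have e : ((d : ℂ))⁻¹ = (((d : ℝ)⁻¹ : ℝ) : ℂ) := by simp
      rw [e, Complex.re_ofReal_mul]
      generalize (_ : ℂ).re = x at h ⊢
      rw [inv_mul_le_iff₀ hkp] at h
      rw [div_le_iff₀ (by positivity), mul_assoc, ← div_eq_inv_mul, le_div_iff₀ hdp]
      nlinarith
end
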